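/- arXiv:2307.07038 — 8 statements merged into one kernel-verified Lean document; each statement's English description precedes it below -/
import Mathlib

section
/- Assume the growth conditions (GC) and that A(x) is nonempty for every x ∈ X. Let u, v : X → ℝ be Borel measurable functions with ‖u‖_W < ∞ and ‖v‖_W < ∞. Then Tu(x) and Tv(x) are finite real numbers for every x ∈ X, and ‖Tu − Tv‖_W ≤ γ·‖u − v‖_W, where γ = αβ < 1; that is, T is a contraction with modulus γ in the weighted norm ‖·‖_W. -/
open MeasureTheory ProbabilityTheory
open scoped ENNReal

/-- The weighted norm `‖u‖_W = sup_x |u x| / W x`, valued in `ℝ≥0∞`. -/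
noncomputable def WNorm {X : Type*} (W u : X → ℝ) : ℝ≥0∞ :=
  ⨆ x, ENNReal.ofReal (|u x| / W x)

/-- The dynamic programming (Bellman) operator
`Tu(x) = inf_{a ∈ A(x)} [C(x,a) + α ∫ u dQ(·|x,a)]`. -/
noncomputable def Tbell {X A : Type*} [MeasurableSpace X] [MeasurableSpace A]
    (Adm : X → Set A) (Q : Kernel (X × A) X) (C : X × A → ℝ) (α : ℝ)
    (u : X → ℝ) (x : X) : ℝ :=
  sInf ((fun a => C (x, a) + α * ∫ y, u y ∂(Q (x, a))) '' Adm x)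

theorem WNorm_bound {X : Type*} (W u : X → ℝ) (hW1 : ∀ x, 1 ≤ W x) (h : WNorm W u < ⊤) (x : X) :
    |u x| ≤ (WNorm W u).toReal * W x := by
  have hW : 0 < W x := lt_of_lt_of_le one_pos (hW1 x)
  have h1 : ENNReal.ofReal (|u x| / W x) ≤ WNorm W u :=
    le_iSup (fun x => ENNReal.ofReal (|u x| / W x)) x
  have h2 := (ENNReal.ofReal_le_iff_le_toReal h.ne).1 h1
  exact (div_le_iff₀ hW).1 h2

theorem W_integral {X : Type*} [MeasurableSpace X] (μ : Measure X) (W : X → ℝ)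
    (hWmeas : Measurable W) (hW1 : ∀ x, 1 ≤ W x) (b : ℝ) (hb : 0 ≤ b)
    (h : ∫⁻ y, ENNReal.ofReal (W y) ∂μ ≤ ENNReal.ofReal b) :
    Integrable W μ ∧ ∫ y, W y ∂μ ≤ b := by
  have h0 : ∀ x, 0 ≤ W x := fun x => zero_le_one.trans (hW1 x)
  constructor
  · refine ⟨hWmeas.aestronglyMeasurable, ?_⟩
    rw [hasFiniteIntegral_iff_ofReal (Filter.Eventually.of_forall h0)]
    exact h.trans_lt ENNReal.ofReal_lt_top
  · rw [integral_eq_lintegral_of_nonneg_ae (Filter.Eventually.of_forall h0)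
      hWmeas.aestronglyMeasurable]
    exact ENNReal.toReal_le_of_le_ofReal hb h

theorem u_integral {X : Type*} [MeasurableSpace X] (μ : Measure X) (W u : X → ℝ)
    (hu : Measurable u) (b c : ℝ) (hc : 0 ≤ c)
    (hW : Integrable W μ ∧ ∫ y, W y ∂μ ≤ b) (hb : ∀ x, |u x| ≤ c * W x) :
    Integrable u μ ∧ |∫ y, u y ∂μ| ≤ c * b := by
  have hi := hW.1.const_mul c
  refine ⟨hi.mono' hu.aestronglyMeasurable (Filter.Eventually.of_forall hb), ?_⟩
  have := norm_integral_le_of_norm_le hi (f := u) (Filter.Eventually.of_forall hb)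
  rw [integral_const_mul] at this
  exact this.trans (mul_le_mul_of_nonneg_left hW.2 hc)

theorem sInf_image_sub_le {A : Type*} (S : Set A) (hS : S.Nonempty) (f g : A → ℝ)
    (hf : BddBelow (f '' S)) (d : ℝ) (h : ∀ a ∈ S, f a ≤ g a + d) :
    sInf (f '' S) - sInf (g '' S) ≤ d := by
  have : sInf (f '' S) - d ≤ sInf (g '' S) := by
    refine le_csInf (hS.image _) ?_
    rintro _ ⟨a, ha, rfl⟩
    have := csInf_le hf ⟨a, ha, rfl⟩
    linarith [h a ha]
  linarith

/-- Under the growth conditions (GC), the dynamic programming operator `T` maps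
Borel functions of finite `W`-norm to real-valued functions (the defining infima
are over nonempty sets bounded below) and is a contraction of modulus
`γ = αβ < 1` in the weighted norm `‖·‖_W`. -/
theorem Tbell_contraction {X A : Type*}
    [MetricSpace X] [PolishSpace X] [MeasurableSpace X] [BorelSpace X]
    [MetricSpace A] [PolishSpace A] [MeasurableSpace A] [BorelSpace A]
    (Adm : X → Set A) (hAne : ∀ x, (Adm x).Nonempty)
    (hKmeas : MeasurableSet {p : X × A | p.2 ∈ Adm p.1})
    (Q : Kernel (X × A) X) [IsMarkovKernel Q]
    (C : X × A → ℝ) (hCmeas : Measurable C)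
    (α : ℝ) (hα0 : 0 < α) (hα1 : α < 1)
    (M β : ℝ) (hM : 0 < M) (hβ : 1 < β)
    (W : X → ℝ) (hWmeas : Measurable W) (hW1 : ∀ x, 1 ≤ W x)
    (hCW : ∀ x, ∀ a ∈ Adm x, |C (x, a)| ≤ M * W x)
    (hQW : ∀ x, ∀ a ∈ Adm x,
      ∫⁻ y, ENNReal.ofReal (W y) ∂(Q (x, a)) ≤ ENNReal.ofReal (β * W x))
    (hγ : α * β < 1)
    (u v : X → ℝ) (hu : Measurable u) (hv : Measurable v)
    (huW : WNorm W u < ⊤) (hvW : WNorm W v < ⊤) :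
    (∀ x, BddBelow ((fun a => C (x, a) + α * ∫ y, u y ∂(Q (x, a))) '' Adm x)) ∧
    (∀ x, BddBelow ((fun a => C (x, a) + α * ∫ y, v y ∂(Q (x, a))) '' Adm x)) ∧
    WNorm W (fun x => Tbell Adm Q C α u x - Tbell Adm Q C α v x) ≤
      ENNReal.ofReal (α * β) * WNorm W (fun x => u x - v x) := by
  have hWi : ∀ x, ∀ a ∈ Adm x, Integrable W (Q (x, a)) ∧ ∫ y, W y ∂(Q (x, a)) ≤ β * W x :=
    fun x a ha => W_integral _ W hWmeas hW1 _
      (mul_nonneg (by linarith) (zero_le_one.trans (hW1 x))) (hQW x a ha)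
  have key : ∀ w : X → ℝ, Measurable w → WNorm W w < ⊤ → ∀ x, ∀ a ∈ Adm x,
      Integrable w (Q (x, a)) ∧
        |∫ y, w y ∂(Q (x, a))| ≤ (WNorm W w).toReal * (β * W x) :=
    fun w hw hwW x a ha => u_integral _ W w hw _ _ ENNReal.toReal_nonneg (hWi x a ha)
      (WNorm_bound W w hW1 hwW)
  have bdd : ∀ w : X → ℝ, Measurable w → WNorm W w < ⊤ → ∀ x,
      BddBelow ((fun a => C (x, a) + α * ∫ y, w y ∂(Q (x, a))) '' Adm x) := by
    intro w hw hwW x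
    refine ⟨-(M * W x) - α * ((WNorm W w).toReal * (β * W x)), ?_⟩
    rintro _ ⟨a, ha, rfl⟩
    have h1 := (abs_le.1 (hCW x a ha)).1
    have h2 := mul_le_mul_of_nonneg_left (abs_le.1 (key w hw hwW x a ha).2).1 hα0.le
    dsimp only
    linarith
  refine ⟨bdd u hu huW, bdd v hv hvW, ?_⟩
  have hdW : WNorm W (fun x => u x - v x) < ⊤ := by
    refine lt_of_le_of_lt (iSup_le fun x => ?_) (ENNReal.add_lt_top.2 ⟨huW, hvW⟩)
    have hW : 0 < W x := lt_of_lt_of_le one_pos (hW1 x)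
    refine le_trans ?_ (add_le_add (le_iSup (fun x => ENNReal.ofReal (|u x| / W x)) x)
      (le_iSup (fun x => ENNReal.ofReal (|v x| / W x)) x))
    rw [← ENNReal.ofReal_add (by positivity) (by positivity), ← add_div]
    exact ENNReal.ofReal_le_ofReal (div_le_div_of_nonneg_right (abs_sub _ _) hW.le)
  set D := WNorm W (fun x => u x - v x) with hD
  refine iSup_le fun x => ?_
  have hW : 0 < W x := lt_of_lt_of_le one_pos (hW1 x)
  have hαβ : 0 ≤ α * β := mul_nonneg hα0.le (by linarith)
  rw [← ENNReal.ofReal_toReal hdW.ne, ← ENNReal.ofReal_mul hαβ]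
  refine ENNReal.ofReal_le_ofReal ((div_le_iff₀ hW).2 ?_)
  have hd : ∀ a ∈ Adm x, |α * ∫ y, u y ∂(Q (x, a)) - α * ∫ y, v y ∂(Q (x, a))|
      ≤ α * β * D.toReal * W x := by
    intro a ha
    have h := (key _ (hu.sub hv) hdW x a ha).2
    have e := integral_sub (key u hu huW x a ha).1 (key v hv hvW x a ha).1
    have h' : |∫ y, u y ∂(Q (x, a)) - ∫ y, v y ∂(Q (x, a))| ≤ D.toReal * (β * W x) := by
      rw [← integral_sub (key u hu huW x a ha).1 (key v hv hvW x a ha).1]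
      exact h
    rw [← mul_sub, abs_mul, abs_of_pos hα0]
    have := mul_le_mul_of_nonneg_left h' hα0.le
    linarith
  rw [abs_le']
  constructor
  · refine sInf_image_sub_le _ (hAne x) _ _ (bdd u hu huW x) _ fun a ha => ?_
    have := (abs_le.1 (hd a ha)).2
    linarith
  · rw [neg_sub]
    refine sInf_image_sub_le _ (hAne x) _ _ (bdd v hv hvW x) _ fun a ha => ?_
    have := (abs_le.1 (hd a ha)).1
    linarith
end

section
/- Assume the growth conditions (GC) and let f be a measurable selector. Then for all Borel measurable u, v : X → ℝ with ‖u‖_W < ∞ and ‖v‖_W < ∞ one has ‖T_f u − T_f v‖_W ≤ γ·‖u − v‖_W, and there exists a unique Borel measurable function V_f : X → ℝ with ‖V_f‖_W < ∞ satisfying V_f(x) = C(x,f(x)) + α ∫_X V_f(y) Q(dy|x,f(x)) for all x ∈ X; moreover ‖V_f‖_W ≤ M/(1−γ). -/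
open MeasureTheory ProbabilityTheory
open scoped ENNReal

/-- Finite `W`-norm bound as a pointwise bound. -/
lemma wnorm_le_iff {X : Type*} {W u : X → ℝ} (hW1 : ∀ x, 1 ≤ W x) {c : ℝ} (hc : 0 ≤ c) :
    WNorm W u ≤ ENNReal.ofReal c ↔ ∀ x, |u x| ≤ c * W x := by
  unfold WNorm
  rw [iSup_le_iff]
  refine forall_congr' fun x => ?_
  rw [ENNReal.ofReal_le_ofReal_iff hc, div_le_iff₀ (by linarith [hW1 x])]

lemma wnorm_bound {X : Type*} {W u : X → ℝ} (hW1 : ∀ x, 1 ≤ W x) (h : WNorm W u < ⊤) :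
    ∀ x, |u x| ≤ (WNorm W u).toReal * W x := by
  rw [← wnorm_le_iff hW1 ENNReal.toReal_nonneg, ENNReal.ofReal_toReal h.ne]

lemma int_bound {X : Type*} [MeasurableSpace X] {μ : Measure X} {W u : X → ℝ} {b c : ℝ}
    (hWmeas : Measurable W) (hW1 : ∀ x, 1 ≤ W x) (hb : 0 ≤ b)
    (hQ : ∫⁻ y, ENNReal.ofReal (W y) ∂μ ≤ ENNReal.ofReal b)
    (hu : Measurable u) (hc : 0 ≤ c) (h : ∀ x, |u x| ≤ c * W x) :
    Integrable W μ ∧ Integrable u μ ∧ |∫ y, u y ∂μ| ≤ c * b := by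
  have hW0 : ∀ x, 0 ≤ W x := fun x => by linarith [hW1 x]
  have hWi : Integrable W μ := by
    refine ⟨hWmeas.aestronglyMeasurable, ?_⟩
    rw [hasFiniteIntegral_iff_ofReal (Filter.Eventually.of_forall hW0)]
    exact hQ.trans_lt ENNReal.ofReal_lt_top
  have hWb : ∫ y, W y ∂μ ≤ b := by
    rw [integral_eq_lintegral_of_nonneg_ae (Filter.Eventually.of_forall hW0)
      hWmeas.aestronglyMeasurable]
    exact ENNReal.toReal_le_of_le_ofReal hb hQ
  refine ⟨hWi, (hWi.const_mul c).mono' hu.aestronglyMeasurable (Filter.Eventually.of_forall h), ?_⟩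
  have := norm_integral_le_of_norm_le (f := u) (hWi.const_mul c) (Filter.Eventually.of_forall h)
  rw [integral_const_mul] at this
  exact this.trans (mul_le_mul_of_nonneg_left hWb hc)

/-- Under the growth conditions (GC), for every measurable selector `f` the
operator `T_f u = C_f + α Q_f u` is a contraction of modulus `γ = αβ` in the
`W`-norm on measurable functions of finite `W`-norm, and it has a unique fixed
point `V_f` there; moreover `‖V_f‖_W ≤ M/(1-γ)`. -/
theorem Tf_contraction_unique_fixedPoint {X A : Type*}
    [MetricSpace X] [PolishSpace X] [MeasurableSpace X] [BorelSpace X]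
    [MetricSpace A] [PolishSpace A] [MeasurableSpace A] [BorelSpace A]
    (Adm : X → Set A) (hAne : ∀ x, (Adm x).Nonempty)
    (hKmeas : MeasurableSet {p : X × A | p.2 ∈ Adm p.1})
    (Q : Kernel (X × A) X) [IsMarkovKernel Q]
    (C : X × A → ℝ) (hCmeas : Measurable C)
    (α : ℝ) (hα0 : 0 < α) (hα1 : α < 1)
    (M β : ℝ) (hM : 0 < M) (hβ : 1 < β)
    (W : X → ℝ) (hWmeas : Measurable W) (hW1 : ∀ x, 1 ≤ W x)
    (hCW : ∀ x, ∀ a ∈ Adm x, |C (x, a)| ≤ M * W x)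
    (hQW : ∀ x, ∀ a ∈ Adm x,
      ∫⁻ y, ENNReal.ofReal (W y) ∂(Q (x, a)) ≤ ENNReal.ofReal (β * W x))
    (hγ : α * β < 1)
    (f : X → A) (hf : Measurable f) (hfsel : ∀ x, f x ∈ Adm x) :
    (∀ u v : X → ℝ, Measurable u → Measurable v → WNorm W u < ⊤ → WNorm W v < ⊤ →
      WNorm W (fun x => (C (x, f x) + α * ∫ y, u y ∂(Q (x, f x))) -
          (C (x, f x) + α * ∫ y, v y ∂(Q (x, f x)))) ≤
        ENNReal.ofReal (α * β) * WNorm W (fun x => u x - v x)) ∧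
    ∃ Vf : X → ℝ,
      (Measurable Vf ∧ WNorm W Vf < ⊤ ∧
        ∀ x, Vf x = C (x, f x) + α * ∫ y, Vf y ∂(Q (x, f x))) ∧
      WNorm W Vf ≤ ENNReal.ofReal (M / (1 - α * β)) ∧
      ∀ Vf' : X → ℝ,
        (Measurable Vf' ∧ WNorm W Vf' < ⊤ ∧
          ∀ x, Vf' x = C (x, f x) + α * ∫ y, Vf' y ∂(Q (x, f x))) → Vf' = Vf := by
  have hW0 : ∀ x, 0 ≤ W x := fun x => by linarith [hW1 x]
  have hg0 : 0 < α * β := by positivity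
  have key : ∀ (u : X → ℝ) (c : ℝ), Measurable u → 0 ≤ c → (∀ x, |u x| ≤ c * W x) → ∀ x,
      Integrable W (Q (x, f x)) ∧ Integrable u (Q (x, f x)) ∧
        |∫ y, u y ∂(Q (x, f x))| ≤ c * (β * W x) := fun u c hu hc h x =>
    int_bound hWmeas hW1 (mul_nonneg (by linarith) (hW0 x)) (hQW x _ (hfsel x)) hu hc h
  have contr : ∀ (u v : X → ℝ) (a b c : ℝ), Measurable u → Measurable v → 0 ≤ a → 0 ≤ b → 0 ≤ c →
      (∀ x, |u x| ≤ a * W x) → (∀ x, |v x| ≤ b * W x) → (∀ x, |u x - v x| ≤ c * W x) →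
      ∀ x, |(C (x, f x) + α * ∫ y, u y ∂(Q (x, f x))) -
          (C (x, f x) + α * ∫ y, v y ∂(Q (x, f x)))| ≤ (α * β * c) * W x := by
    intro u v a b c hu hv ha hb hc hua hvb huv x
    have h1 := (key u a hu ha hua x).2.1
    have h2 := (key v b hv hb hvb x).2.1
    have h3 := (key (fun x => u x - v x) c (hu.sub hv) hc huv x).2.2
    rw [integral_sub h1 h2] at h3
    rw [add_sub_add_left_eq_sub, ← mul_sub, abs_mul, abs_of_pos hα0]
    calc _ ≤ α * (c * (β * W x)) := mul_le_mul_of_nonneg_left h3 hα0.le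
      _ = _ := by ring
  have tri : ∀ (u v : X → ℝ) (a b : ℝ), (∀ x, |u x| ≤ a * W x) → (∀ x, |v x| ≤ b * W x) →
      ∀ x, |u x - v x| ≤ (a + b) * W x := by
    intro u v a b hu hv x
    have := abs_sub (u x) (v x)
    linarith [hu x, hv x]
  refine ⟨?_, ?_⟩
  · intro u v hu hv hun hvn
    have hu' := wnorm_bound hW1 hun
    have hv' := wnorm_bound hW1 hvn
    have hd : WNorm W (fun x => u x - v x) < ⊤ :=
      ((wnorm_le_iff hW1 (by positivity)).2 (tri u v _ _ hu' hv')).trans_lt ENNReal.ofReal_lt_top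
    rw [← ENNReal.ofReal_toReal hd.ne, ← ENNReal.ofReal_mul hg0.le,
      wnorm_le_iff hW1 (by positivity)]
    exact contr u v _ _ _ hu hv ENNReal.toReal_nonneg ENNReal.toReal_nonneg ENNReal.toReal_nonneg
      hu' hv' (wnorm_bound hW1 hd)
  · set T : (X → ℝ) → X → ℝ := fun u x => C (x, f x) + α * ∫ y, u y ∂(Q (x, f x)) with hT
    set L : ℝ := M / (1 - α * β) with hL
    have h1g : 0 < 1 - α * β := by linarith
    have hL0 : 0 ≤ L := by positivity
    have hLe : M + α * β * L = L := by rw [hL]; field_simp; ring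
    have hTm : ∀ u, Measurable u → Measurable (T u) := by
      intro u hu
      have hxf : Measurable fun x => (x, f x) := measurable_id.prodMk hf
      have h1 : StronglyMeasurable fun p : X × A => ∫ y, u y ∂(Q p) :=
        hu.stronglyMeasurable.integral_kernel
      exact (hCmeas.comp hxf).add ((h1.measurable.comp hxf).const_mul α)
    have hTb : ∀ u, Measurable u → (∀ x, |u x| ≤ L * W x) → ∀ x, |T u x| ≤ L * W x := by
      intro u hu hb x
      have h3 := (key u L hu hL0 hb x).2.2
      calc |T u x| ≤ |C (x, f x)| + |α * ∫ y, u y ∂(Q (x, f x))| := abs_add_le _ _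
        _ = |C (x, f x)| + α * |∫ y, u y ∂(Q (x, f x))| := by rw [abs_mul, abs_of_pos hα0]
        _ ≤ M * W x + α * (L * (β * W x)) :=
          add_le_add (hCW x _ (hfsel x)) (mul_le_mul_of_nonneg_left h3 hα0.le)
        _ = (M + α * β * L) * W x := by ring
        _ = L * W x := by rw [hLe]
    let V : ℕ → X → ℝ := fun n => T^[n] (fun _ => 0)
    have hVs : ∀ n, V (n + 1) = T (V n) := fun n => Function.iterate_succ_apply' T n _
    have hVm : ∀ n, Measurable (V n) := by
      intro n
      induction n with
      | zero => exact measurable_const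
      | succ n ih => rw [hVs]; exact hTm _ ih
    have hVb : ∀ n x, |V n x| ≤ L * W x := by
      intro n
      induction n with
      | zero => intro x; simpa [V] using mul_nonneg hL0 (hW0 x)
      | succ n ih => rw [hVs]; exact hTb _ (hVm n) ih
    have hVd : ∀ n x, |V (n + 1) x - V n x| ≤ ((α * β) ^ n * L) * W x := by
      intro n
      induction n with
      | zero => intro x; simpa [V] using hVb 1 x
      | succ n ih =>
        intro x
        have := contr (V (n + 1)) (V n) L L _ (hVm _) (hVm _) hL0 hL0 (by positivity)
          (hVb _) (hVb _) ih x
        rw [hVs (n + 1)]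
        nth_rewrite 2 [hVs n]
        rw [pow_succ']
        rw [mul_assoc (α * β)]
        exact this
    have hlim : ∀ x, ∃ l, Filter.Tendsto (fun n => V n x) Filter.atTop (nhds l) := by
      intro x
      refine cauchySeq_tendsto_of_complete (cauchySeq_of_le_geometric (α * β) (L * W x) hγ ?_)
      intro n
      rw [dist_comm, Real.dist_eq]
      exact (hVd n x).trans_eq (by ring)
    choose G hG using hlim
    have hGm : Measurable G :=
      measurable_of_tendsto_metrizable hVm (tendsto_pi_nhds.2 hG)
    have hGb : ∀ x, |G x| ≤ L * W x := fun x =>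
      le_of_tendsto (hG x).abs (Filter.Eventually.of_forall fun n => hVb n x)
    have hGf : ∀ x, G x = T G x := by
      intro x
      have h1 : Filter.Tendsto (fun n => V (n + 1) x) Filter.atTop (nhds (G x)) :=
        (hG x).comp (Filter.tendsto_add_atTop_nat 1)
      have h2 : Filter.Tendsto (fun n => ∫ y, V n y ∂(Q (x, f x))) Filter.atTop
          (nhds (∫ y, G y ∂(Q (x, f x)))) :=
        tendsto_integral_of_dominated_convergence (fun y => L * W y)
          (fun n => (hVm n).aestronglyMeasurable) ((key G L hGm hL0 hGb x).1.const_mul L)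
          (fun n => Filter.Eventually.of_forall (hVb n)) (Filter.Eventually.of_forall hG)
      refine tendsto_nhds_unique h1 ?_
      simp only [hVs]
      exact (h2.const_mul α).const_add _
    have hGn : WNorm W G ≤ ENNReal.ofReal L := (wnorm_le_iff hW1 hL0).2 hGb
    refine ⟨G, ⟨hGm, hGn.trans_lt ENNReal.ofReal_lt_top, hGf⟩, hGn, ?_⟩
    rintro U ⟨hUm, hUn, hUf⟩
    have hUb := wnorm_bound hW1 hUn
    set c : ℝ := (WNorm W U).toReal with hc
    have hc0 : 0 ≤ c := ENNReal.toReal_nonneg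
    have hd : ∀ n : ℕ, ∀ x, |U x - G x| ≤ ((α * β) ^ n * (c + L)) * W x := by
      intro n
      induction n with
      | zero => simpa using tri U G c L hUb hGb
      | succ n ih =>
        intro x
        have := contr U G c L _ hUm hGm hc0 hL0 (by positivity) hUb hGb ih x
        rw [hUf x, hGf x, pow_succ', mul_assoc (α * β)]
        exact this
    funext x
    have h0 : Filter.Tendsto (fun n : ℕ => ((α * β) ^ n * (c + L)) * W x) Filter.atTop
        (nhds 0) := by
      simpa using ((tendsto_pow_atTop_nhds_zero_of_lt_one hg0.le hγ).mul_const (c + L)).mul_const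
        (W x)
    have h1 : |U x - G x| ≤ 0 := ge_of_tendsto' h0 fun n => hd n x
    exact sub_eq_zero.1 (abs_nonpos_iff.1 h1)
end

section
/- Assume the growth conditions (GC) and the compactness-continuity conditions (CC). Let u : X → ℝ be lower semicontinuous with ‖u‖_W < ∞. Then Tu is lower semicontinuous with ‖Tu‖_W < ∞, the infimum defining Tu(x) is attained for every x ∈ X, and there exists a measurable selector f (a Borel measurable f : X → A with f(x) ∈ A(x) for all x) such that Tu(x) = C(x,f(x)) + α ∫_X u(y) Q(dy|x,f(x)) for all x ∈ X. -/
open MeasureTheory ProbabilityTheory Filter Topology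
open scoped ENNReal

namespace TbellAux

/-- Lipschitz regularisation of a nonnegative function. -/
noncomputable def env {X : Type*} [MetricSpace X] (v : X → ℝ) (n : ℕ) (x : X) : ℝ :=
  ⨅ y, (min (v y) n + n * dist x y)

theorem env_term_nonneg {X : Type*} [MetricSpace X] {v : X → ℝ} (hv0 : ∀ x, 0 ≤ v x)
    (n : ℕ) (x y : X) : 0 ≤ min (v y) n + n * dist x y := by
  have := hv0 y
  positivity

theorem env_bdd {X : Type*} [MetricSpace X] {v : X → ℝ} (hv0 : ∀ x, 0 ≤ v x)
    (n : ℕ) (x : X) : BddBelow (Set.range fun y => min (v y) (n : ℝ) + n * dist x y) :=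
  ⟨0, by rintro _ ⟨y, rfl⟩; exact env_term_nonneg hv0 n x y⟩

theorem env_nonneg {X : Type*} [MetricSpace X] {v : X → ℝ} (hv0 : ∀ x, 0 ≤ v x)
    (n : ℕ) (x : X) : 0 ≤ env v n x :=
  Real.iInf_nonneg fun y => env_term_nonneg hv0 n x y

theorem env_le {X : Type*} [MetricSpace X] {v : X → ℝ} (hv0 : ∀ x, 0 ≤ v x)
    (n : ℕ) (x : X) : env v n x ≤ min (v x) n := by
  have := ciInf_le (env_bdd hv0 n x) x
  simpa [env] using this

theorem env_mono {X : Type*} [MetricSpace X] {v : X → ℝ} (hv0 : ∀ x, 0 ≤ v x)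
    (x : X) : Monotone fun n => env v n x := by
  intro m n hmn
  have hmn' : (m : ℝ) ≤ n := by exact_mod_cast hmn
  refine ciInf_mono (env_bdd hv0 m x) fun y => ?_
  gcongr

theorem env_continuous {X : Type*} [MetricSpace X] {v : X → ℝ} (hv0 : ∀ x, 0 ≤ v x)
    (n : ℕ) : Continuous (env v n) := by
  refine (LipschitzWith.of_le_add_mul (n : NNReal) fun x x' => ?_).continuous
  have : Nonempty X := ⟨x⟩
  rw [← sub_le_iff_le_add]
  refine le_ciInf fun y => ?_
  have h1 := ciInf_le (env_bdd hv0 n x) y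
  have h2 : (n : ℝ) * dist x y ≤ n * (dist x x' + dist x' y) := by
    gcongr; exact dist_triangle _ _ _
  simp only [env, NNReal.coe_natCast] at *
  linarith

theorem env_tendsto {X : Type*} [MetricSpace X] {v : X → ℝ} (hv0 : ∀ x, 0 ≤ v x)
    (hv : LowerSemicontinuous v) (x : X) :
    Tendsto (fun n => env v n x) atTop (𝓝 (v x)) := by
  have : Nonempty X := ⟨x⟩
  rw [tendsto_order]
  refine ⟨fun c hc => ?_, fun c hc => Eventually.of_forall fun n =>
    ((env_le hv0 n x).trans (min_le_left _ _)).trans_lt hc⟩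
  obtain ⟨c', hcc', hc'⟩ := exists_between hc
  obtain ⟨δ, hδ, hball⟩ := Metric.eventually_nhds_iff.1 (hv x c' hc')
  have e1 : ∀ᶠ n : ℕ in atTop, c' ≤ (n : ℝ) :=
    tendsto_natCast_atTop_atTop.eventually_ge_atTop c'
  have e2 : ∀ᶠ n : ℕ in atTop, c' / δ ≤ (n : ℝ) :=
    tendsto_natCast_atTop_atTop.eventually_ge_atTop _
  filter_upwards [e1, e2] with n h1 h2
  refine hcc'.trans_le (le_ciInf fun y => ?_)
  by_cases hy : dist y x < δ
  · have h3 : c' ≤ min (v y) n := le_min (hball hy).le h1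
    have : 0 ≤ (n : ℝ) * dist x y := by positivity
    linarith
  · have h3 : 0 ≤ min (v y) (n : ℝ) := le_min (hv0 y) (Nat.cast_nonneg n)
    rw [div_le_iff₀ hδ] at h2
    rw [dist_comm, not_lt] at hy
    have : (n : ℝ) * δ ≤ n * dist x y := by gcongr
    linarith

/-- Integrals of nonnegative lsc functions are lsc along weakly continuous kernels. -/
theorem lsc_integral {X P : Type*} [MetricSpace X] [MeasurableSpace X] [BorelSpace X]
    [TopologicalSpace P] (K : Set P) (Q : P → Measure X) [∀ p, IsProbabilityMeasure (Q p)]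
    (hQweak : ∀ g : X → ℝ, Continuous g → (∃ b, ∀ y, |g y| ≤ b) →
      ContinuousOn (fun p => ∫ y, g y ∂(Q p)) K)
    (v : X → ℝ) (hv0 : ∀ x, 0 ≤ v x) (hv : LowerSemicontinuous v)
    (hint : ∀ p ∈ K, Integrable v (Q p)) :
    LowerSemicontinuousOn (fun p => ∫ y, v y ∂(Q p)) K := by
  have hb : ∀ n : ℕ, ∀ y, |env v n y| ≤ n := fun n y => by
    rw [abs_of_nonneg (env_nonneg hv0 n y)]
    exact (env_le hv0 n y).trans (min_le_right _ _)
  have hi : ∀ (n : ℕ) p, Integrable (env v n) (Q p) := fun n p =>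
    Integrable.of_bound (env_continuous hv0 n).aestronglyMeasurable (n : ℝ)
      (Eventually.of_forall fun y => by simpa using hb n y)
  intro p hp c hc
  have ht : Tendsto (fun n => ∫ y, env v n y ∂(Q p)) atTop (𝓝 (∫ y, v y ∂(Q p))) :=
    integral_tendsto_of_tendsto_of_monotone (fun n => hi n p) (hint p hp)
      (Eventually.of_forall fun y => env_mono hv0 y)
      (Eventually.of_forall fun y => env_tendsto hv0 hv y)
  obtain ⟨n, hn⟩ := (ht.eventually_const_lt hc).exists
  have hcont := hQweak (env v n) (env_continuous hv0 n) ⟨n, hb n⟩ p hp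
  filter_upwards [hcont.eventually_const_lt hn, self_mem_nhdsWithin] with p' h1 hp'
  exact h1.trans_le (integral_mono (hi n p') (hint p' hp')
    fun y => (env_le hv0 n y).trans (min_le_left _ _))

theorem isClosed_hit {X A : Type*} [TopologicalSpace X] [TopologicalSpace A]
    (Adm : X → Set A) (hAcomp : ∀ x, IsCompact (Adm x))
    (hAusc : ∀ x, ∀ U : Set A, IsOpen U → Adm x ⊆ U → ∀ᶠ x' in 𝓝 x, Adm x' ⊆ U)
    (G : X × A → ℝ) (hG : LowerSemicontinuousOn G {p : X × A | p.2 ∈ Adm p.1})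
    (F : Set A) (hF : IsClosed F) (c : ℝ) :
    IsClosed {x | ∃ a ∈ Adm x ∩ F, G (x, a) ≤ c} := by
  obtain ⟨O, hO, hKO⟩ := lowerSemicontinuousOn_iff_preimage_Ioi.1 hG c
  rw [← isOpen_compl_iff, isOpen_iff_mem_nhds]
  intro x hx
  have hsub : ({x} : Set X) ×ˢ Adm x ⊆ O ∪ (Set.univ ×ˢ Fᶜ) := by
    rintro ⟨x', a⟩ ⟨rfl, ha⟩
    by_cases haF : a ∈ F
    · left
      have : (x', a) ∈ {p : X × A | p.2 ∈ Adm p.1} ∩ G ⁻¹' Set.Ioi c :=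
        ⟨ha, not_le.1 fun h => hx ⟨a, ⟨ha, haF⟩, h⟩⟩
      rw [hKO] at this
      exact this.2
    · right; exact ⟨trivial, haF⟩
  obtain ⟨V, U, hV, hU, hxV, hAU, hVU⟩ := generalized_tube_lemma isCompact_singleton (hAcomp x)
    (hO.union (isOpen_univ.prod hF.isOpen_compl)) hsub
  filter_upwards [hAusc x U hU hAU, hV.mem_nhds (hxV rfl)] with x' hx'U hx'V
  rintro ⟨a, ⟨ha, haF⟩, hle⟩
  rcases hVU (⟨hx'V, hx'U ha⟩ : (x', a) ∈ V ×ˢ U) with h | h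
  · have : (x', a) ∈ {p : X × A | p.2 ∈ Adm p.1} ∩ O := ⟨ha, h⟩
    rw [← hKO] at this
    exact absurd hle (not_le.2 this.2)
  · exact h.2 haF

/-- Minimisers of `g x` on `Φ x`. -/
def argm {X A : Type*} (Φ : X → Set A) (g : X → A → ℝ) (x : X) : Set A :=
  {a ∈ Φ x | ∀ b ∈ Φ x, g x a ≤ g x b}

/-- Nonempty compact valued and measurable for closed sets. -/
def Good {X A : Type*} [MeasurableSpace X] [TopologicalSpace A] (Φ : X → Set A) : Prop :=
  (∀ x, (Φ x).Nonempty) ∧ (∀ x, IsCompact (Φ x)) ∧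
    ∀ F, IsClosed F → MeasurableSet {x | (Φ x ∩ F).Nonempty}

theorem argm_good {X A : Type*} [MeasurableSpace X] [TopologicalSpace A]
    (Φ : X → Set A) (hne : ∀ x, (Φ x).Nonempty) (hc : ∀ x, IsCompact (Φ x))
    (g : X → A → ℝ) (hg : ∀ x, LowerSemicontinuousOn (g x) (Φ x))
    (hm : ∀ F, IsClosed F → ∀ q : ℝ, MeasurableSet {x | ∃ a ∈ Φ x ∩ F, g x a ≤ q}) :
    Good (argm Φ g) := by
  have hmin : ∀ x, ∃ a ∈ Φ x, ∀ b ∈ Φ x, g x a ≤ g x b := fun x => by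
    obtain ⟨a, ha, h⟩ := LowerSemicontinuousOn.exists_isMinOn (hne x) (hc x) (hg x)
    exact ⟨a, ha, fun b hb => h hb⟩
  refine ⟨fun x => ?_, fun x => ?_, fun F hF => ?_⟩
  · obtain ⟨a, ha, h⟩ := hmin x
    exact ⟨a, ha, h⟩
  · obtain ⟨a, ha, h⟩ := hmin x
    have : argm Φ g x = Φ x ∩ g x ⁻¹' Set.Iic (g x a) := by
      ext b
      exact ⟨fun hb => ⟨hb.1, hb.2 a ha⟩, fun hb => ⟨hb.1, fun b' hb' => le_trans hb.2 (h b' hb')⟩⟩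
    rw [this]
    exact (hg x).isCompact_inter_preimage_Iic (hc x) _
  · have : {x | (argm Φ g x ∩ F).Nonempty} = ⋂ q : ℚ,
        ({x | ∃ a ∈ Φ x ∩ F, g x a ≤ q} ∪ {x | ∃ a ∈ Φ x ∩ Set.univ, g x a ≤ q}ᶜ) := by
      ext x
      simp only [Set.mem_iInter]
      constructor
      · rintro ⟨a, ha, haF⟩ q
        by_cases hq : g x a ≤ q
        · left; exact ⟨a, ⟨ha.1, haF⟩, hq⟩
        · right
          rintro ⟨b, hb, hbq⟩
          exact hq ((ha.2 b hb.1).trans hbq)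
      · intro H
        obtain ⟨a, ha, h⟩ := hmin x
        have H' : ∀ q : ℚ, g x a ≤ q → ∃ b ∈ Φ x ∩ F, g x b ≤ q := fun q hq =>
          (H q).resolve_right fun hn => hn ⟨a, ⟨ha, trivial⟩, hq⟩
        have hne' : (Φ x ∩ F).Nonempty := by
          obtain ⟨q, hq⟩ := exists_rat_gt (g x a)
          obtain ⟨b, hb, -⟩ := H' q hq.le
          exact ⟨b, hb⟩
        obtain ⟨b, hb, hbm⟩ := LowerSemicontinuousOn.exists_isMinOn hne' ((hc x).inter_right hF)
          ((hg x).mono Set.inter_subset_left)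
        refine ⟨b, ⟨hb.1, fun b' hb' => ?_⟩, hb.2⟩
        refine le_trans ?_ (h b' hb')
        by_contra hlt
        obtain ⟨q, hq1, hq2⟩ := exists_rat_btwn (not_le.1 hlt)
        obtain ⟨d, hd, hdq⟩ := H' q hq1.le
        exact absurd ((hbm hd).trans hdq) (not_le.2 hq2)
    rw [this]
    exact MeasurableSet.iInter fun q => (hm F hF q).union (hm _ isClosed_univ q).compl

theorem Good.step {X A : Type*} [MeasurableSpace X] [TopologicalSpace A]
    {Φ : X → Set A} (h : Good Φ) (g : A → ℝ) (hg : Continuous g) :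
    Good (argm Φ fun _ => g) := by
  refine argm_good Φ h.1 h.2.1 _ (fun x => hg.lowerSemicontinuous.lowerSemicontinuousOn _) ?_
  intro F hF q
  have := h.2.2 (F ∩ g ⁻¹' Set.Iic q) (hF.inter (isClosed_Iic.preimage hg))
  convert this using 1
  ext x
  constructor
  · rintro ⟨a, ha, h⟩; exact ⟨a, ha.1, ha.2, h⟩
  · rintro ⟨a, ha, h⟩; exact ⟨a, ⟨ha, h.1⟩, h.2⟩

/-- Iterated minimisation. -/
def iterm {X A : Type*} (Φ : X → Set A) (g : ℕ → A → ℝ) : ℕ → X → Set A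
  | 0 => Φ
  | n + 1 => argm (iterm Φ g n) fun _ => g n

theorem Good.selector {X A : Type*} [MeasurableSpace X] [MetricSpace A]
    [SecondCountableTopology A] [MeasurableSpace A] [BorelSpace A]
    {Φ : X → Set A} (h : Good Φ) : ∃ f : X → A, Measurable f ∧ ∀ x, f x ∈ Φ x := by
  classical
  rcases isEmpty_or_nonempty X with hX | ⟨⟨x0⟩⟩
  · exact ⟨fun x => hX.elim x, measurable_of_empty _, fun x => hX.elim x⟩
  have : Nonempty A := ⟨(h.1 x0).some⟩
  let g : ℕ → A → ℝ := fun n a => dist a (TopologicalSpace.denseSeq A n)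
  have hgc : ∀ n, Continuous (g n) := fun n => by fun_prop
  have hgood : ∀ n, Good (iterm Φ g n) := fun n => by
    induction n with
    | zero => exact h
    | succ n ih => exact ih.step (g n) (hgc n)
  have hanti : ∀ x n, iterm Φ g (n + 1) x ⊆ iterm Φ g n x := fun x n a ha => ha.1
  have key : ∀ x F, IsClosed F → (∀ n, (iterm Φ g n x ∩ F).Nonempty) →
      (⋂ n, iterm Φ g n x ∩ F).Nonempty := fun x F hF hn =>
    IsCompact.nonempty_iInter_of_sequence_nonempty_isCompact_isClosed _
      (fun n => Set.inter_subset_inter_left _ (hanti x n)) hn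
      (((hgood 0).2.1 x).inter_right hF) fun n => ((hgood n).2.1 x).isClosed.inter hF
  have hex : ∀ x, ∃ a, ∀ n, a ∈ iterm Φ g n x := fun x => by
    obtain ⟨a, ha⟩ := key x Set.univ isClosed_univ fun n => by simpa using (hgood n).1 x
    exact ⟨a, fun n => (Set.mem_iInter.1 ha n).1⟩
  choose f hf using hex
  have huniq : ∀ x a, (∀ n, a ∈ iterm Φ g n x) → a = f x := fun x a ha => by
    have hd : ∀ n, g n a = g n (f x) := fun n =>
      le_antisymm ((ha (n + 1)).2 _ (hf x n)) ((hf x (n + 1)).2 _ (ha n))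
    have heq : (fun b => dist a b) = fun b => dist (f x) b :=
      Continuous.ext_on (TopologicalSpace.denseRange_denseSeq A) (by fun_prop) (by fun_prop)
        (by rintro _ ⟨n, rfl⟩; exact hd n)
    have := congrFun heq (f x)
    simpa using this
  refine ⟨f, measurable_of_isClosed fun F hF => ?_, fun x => hf x 0⟩
  have : f ⁻¹' F = ⋂ n, {x | (iterm Φ g n x ∩ F).Nonempty} := by
    ext x
    simp only [Set.mem_iInter]
    constructor
    · intro hx n
      exact ⟨f x, hf x n, hx⟩
    · intro H
      obtain ⟨a, ha⟩ := key x F hF H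
      have ha' := Set.mem_iInter.1 ha
      have := huniq x a fun n => (ha' n).1
      rw [Set.mem_preimage, ← this]
      exact (ha' 0).2
  rw [this]
  exact MeasurableSet.iInter fun n => (hgood n).2.2 F hF

end TbellAux

/-- Under the growth conditions (GC) and the compactness-continuity conditions
(CC), for every lower semicontinuous `u` of finite `W`-norm, `Tu` is lower
semicontinuous of finite `W`-norm, the infimum defining `Tu(x)` is attained for
every `x`, and there is a measurable selector `f` with `Tu = T_f u`. -/
theorem Tbell_lsc_and_selector {X A : Type*}
    [MetricSpace X] [PolishSpace X] [MeasurableSpace X] [BorelSpace X]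
    [MetricSpace A] [PolishSpace A] [MeasurableSpace A] [BorelSpace A]
    (Adm : X → Set A) (hAne : ∀ x, (Adm x).Nonempty)
    (hKmeas : MeasurableSet {p : X × A | p.2 ∈ Adm p.1})
    (Q : Kernel (X × A) X) [IsMarkovKernel Q]
    (C : X × A → ℝ) (hCmeas : Measurable C)
    (α : ℝ) (hα0 : 0 < α) (hα1 : α < 1)
    (M β : ℝ) (hM : 0 < M) (hβ : 1 < β)
    (W : X → ℝ) (hWmeas : Measurable W) (hW1 : ∀ x, 1 ≤ W x)
    (hCW : ∀ x, ∀ a ∈ Adm x, |C (x, a)| ≤ M * W x)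
    (hQW : ∀ x, ∀ a ∈ Adm x,
      ∫⁻ y, ENNReal.ofReal (W y) ∂(Q (x, a)) ≤ ENNReal.ofReal (β * W x))
    (hγ : α * β < 1)
    (hAcomp : ∀ x, IsCompact (Adm x))
    (hAusc : ∀ x, ∀ U : Set A, IsOpen U → Adm x ⊆ U → ∀ᶠ x' in 𝓝 x, Adm x' ⊆ U)
    (hClsc : LowerSemicontinuousOn C {p : X × A | p.2 ∈ Adm p.1})
    (hQweak : ∀ g : X → ℝ, Continuous g → (∃ b, ∀ y, |g y| ≤ b) →
      ContinuousOn (fun p : X × A => ∫ y, g y ∂(Q p)) {p : X × A | p.2 ∈ Adm p.1})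
    (hWcont : Continuous W)
    (hQWcont : ContinuousOn (fun p : X × A => ∫ y, W y ∂(Q p))
      {p : X × A | p.2 ∈ Adm p.1})
    (u : X → ℝ) (hu : LowerSemicontinuous u) (huW : WNorm W u < ⊤) :
    LowerSemicontinuous (Tbell Adm Q C α u) ∧
    WNorm W (Tbell Adm Q C α u) < ⊤ ∧
    (∀ x, ∃ a ∈ Adm x,
      Tbell Adm Q C α u x = C (x, a) + α * ∫ y, u y ∂(Q (x, a))) ∧
    ∃ f : X → A, Measurable f ∧ (∀ x, f x ∈ Adm x) ∧
      ∀ x, Tbell Adm Q C α u x = C (x, f x) + α * ∫ y, u y ∂(Q (x, f x)) := by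
  obtain ⟨m, hm⟩ : ∃ m : ℝ, ∀ x, |u x| ≤ m * W x := by
    refine ⟨(WNorm W u).toReal, fun x => ?_⟩
    have hWx : 0 < W x := zero_lt_one.trans_le (hW1 x)
    rw [← div_le_iff₀ hWx]
    refine (ENNReal.ofReal_le_iff_le_toReal huW.ne).1 ?_
    exact le_iSup (fun x => ENNReal.ofReal (|u x| / W x)) x
  have hW0 : ∀ x, 0 ≤ W x := fun x => zero_le_one.trans (hW1 x)
  have hWint : ∀ x, ∀ a ∈ Adm x, Integrable W (Q (x, a)) := fun x a ha => by
    refine ⟨hWmeas.aestronglyMeasurable, ?_⟩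
    rw [hasFiniteIntegral_iff_ofReal (Eventually.of_forall hW0)]
    exact (hQW x a ha).trans_lt ENNReal.ofReal_lt_top
  have hWle : ∀ x, ∀ a ∈ Adm x, ∫ y, W y ∂(Q (x, a)) ≤ β * W x := fun x a ha => by
    rw [integral_eq_lintegral_of_nonneg_ae (Eventually.of_forall hW0) hWmeas.aestronglyMeasurable]
    refine ENNReal.toReal_le_of_le_ofReal ?_ (hQW x a ha)
    exact mul_nonneg (by linarith) (hW0 x)
  have huint : ∀ x, ∀ a ∈ Adm x, Integrable u (Q (x, a)) := fun x a ha =>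
    ((hWint x a ha).const_mul m).mono' hu.measurable.aestronglyMeasurable
      (Eventually.of_forall fun y => hm y)
  -- lower semicontinuity of the integral part
  have hv : LowerSemicontinuous fun x => u x + m * W x :=
    hu.add (continuous_const.mul hWcont).lowerSemicontinuous
  have hI : LowerSemicontinuousOn (fun p : X × A => ∫ y, u y ∂(Q p))
      {p : X × A | p.2 ∈ Adm p.1} := by
    have h1 := TbellAux.lsc_integral {p : X × A | p.2 ∈ Adm p.1} (fun p => Q p) hQweak
      (fun x => u x + m * W x) (fun x => by have := (abs_le.1 (hm x)).1; linarith) hv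
      (fun p hp => (huint p.1 p.2 hp).add ((hWint p.1 p.2 hp).const_mul m))
    have h2 : LowerSemicontinuousOn (fun p : X × A => -(m * ∫ y, W y ∂(Q p)))
        {p : X × A | p.2 ∈ Adm p.1} :=
      (continuousOn_const.mul hQWcont).neg.lowerSemicontinuousOn
    have h3 := LowerSemicontinuousOn.add h1 h2
    have heq : ∀ p ∈ {p : X × A | p.2 ∈ Adm p.1},
        ∫ y, (u y + m * W y) ∂(Q p) + -(m * ∫ y, W y ∂(Q p)) = ∫ y, u y ∂(Q p) := by
      intro p hp
      rw [integral_add (huint p.1 p.2 hp) ((hWint p.1 p.2 hp).const_mul m), integral_const_mul]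
      ring
    intro p hp c hc
    have hc' : c < ∫ y, (u y + m * W y) ∂(Q p) + -(m * ∫ y, W y ∂(Q p)) := by
      rw [heq p hp]; exact hc
    filter_upwards [h3 p hp c hc', self_mem_nhdsWithin] with p' h4 hp'
    rw [heq p' hp'] at h4
    exact h4
  let G : X × A → ℝ := fun p => C p + α * ∫ y, u y ∂(Q p)
  have hG : LowerSemicontinuousOn G {p : X × A | p.2 ∈ Adm p.1} := by
    refine LowerSemicontinuousOn.add hClsc ?_
    intro p hp c hc
    have hc' : c / α < ∫ y, u y ∂(Q p) := by
      rw [div_lt_iff₀ hα0, mul_comm]; exact hc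
    filter_upwards [hI p hp _ hc'] with p' hp'
    rw [gt_iff_lt, div_lt_iff₀ hα0, mul_comm] at hp'
    exact hp'
  have hGx : ∀ x, LowerSemicontinuousOn (fun a => G (x, a)) (Adm x) := by
    intro x a ha c hc
    have ht : Tendsto (fun a => (x, a)) (𝓝[Adm x] a) (𝓝[{p : X × A | p.2 ∈ Adm p.1}] (x, a)) :=
      tendsto_nhdsWithin_of_tendsto_nhds_of_eventually_within _
        ((by fun_prop : Continuous fun a : A => (x, a)).continuousAt.tendsto.mono_left
          nhdsWithin_le_nhds) self_mem_nhdsWithin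
    exact ht.eventually (hG (x, a) ha c hc)
  have hmin : ∀ x, ∀ a ∈ Adm x, (∀ b ∈ Adm x, G (x, a) ≤ G (x, b)) →
      Tbell Adm Q C α u x = G (x, a) := fun x a ha h =>
    IsLeast.csInf_eq ⟨⟨a, ha, rfl⟩, by rintro _ ⟨b, hb, rfl⟩; exact h b hb⟩
  have hclosed := TbellAux.isClosed_hit Adm hAcomp hAusc G hG
  have hgood : TbellAux.Good (TbellAux.argm Adm fun x a => G (x, a)) :=
    TbellAux.argm_good Adm hAne hAcomp _ hGx fun F hF q => (hclosed F hF q).measurableSet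
  obtain ⟨f, hfm, hf⟩ := hgood.selector
  have hfeq : ∀ x, Tbell Adm Q C α u x = G (x, f x) := fun x => hmin x (f x) (hf x).1 (hf x).2
  refine ⟨?_, ?_, fun x => ⟨f x, (hf x).1, hfeq x⟩, f, hfm, fun x => (hf x).1, hfeq⟩
  · rw [lowerSemicontinuous_iff_isClosed_preimage]
    intro c
    convert hclosed Set.univ isClosed_univ c using 1
    ext x
    simp only [Set.mem_preimage, Set.mem_Iic, hfeq, Set.mem_ofPred_eq, Set.inter_univ]
    exact ⟨fun h => ⟨f x, (hf x).1, h⟩, fun ⟨a, ha, h⟩ => ((hf x).2 a ha).trans h⟩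
  · refine lt_of_le_of_lt (iSup_le fun x => ?_)
      (ENNReal.ofReal_lt_top (r := M + α * (|m| * β)))
    refine ENNReal.ofReal_le_ofReal ?_
    have hWx : 0 < W x := zero_lt_one.trans_le (hW1 x)
    rw [div_le_iff₀ hWx, hfeq]
    have h1 := hCW x (f x) (hf x).1
    have h2 : |∫ y, u y ∂(Q (x, f x))| ≤ |m| * (β * W x) := by
      calc |∫ y, u y ∂(Q (x, f x))| ≤ ∫ y, |m| * W y ∂(Q (x, f x)) := by
            rw [← Real.norm_eq_abs]
            refine norm_integral_le_of_norm_le (f := u) ((hWint x _ (hf x).1).const_mul _)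
              (Eventually.of_forall fun y => ?_)
            exact (hm y).trans (mul_le_mul_of_nonneg_right (le_abs_self m) (hW0 y))
        _ = |m| * ∫ y, W y ∂(Q (x, f x)) := integral_const_mul _ _
        _ ≤ _ := mul_le_mul_of_nonneg_left (hWle x _ (hf x).1) (abs_nonneg m)
    calc |G (x, f x)| ≤ |C (x, f x)| + |α * ∫ y, u y ∂(Q (x, f x))| := abs_add_le _ _
      _ = |C (x, f x)| + α * |∫ y, u y ∂(Q (x, f x))| := by rw [abs_mul, abs_of_pos hα0]
      _ ≤ M * W x + α * (|m| * (β * W x)) := by gcongr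
      _ = _ := by ring
end

section
/- Assume the growth conditions (GC) and the compactness-continuity conditions (CC). Then there exists a unique lower semicontinuous function v* : X → ℝ with ‖v*‖_W < ∞ satisfying the optimality equation v*(x) = inf_{a∈A(x)} [C(x,a) + α ∫_X v*(y) Q(dy|x,a)] for all x ∈ X; that is, v* is the unique fixed point of the dynamic programming operator T in the class of lower semicontinuous functions of finite W-norm. -/
open MeasureTheory ProbabilityTheory Filter Topology
open scoped ENNReal

/-- Lower semicontinuous nonnegative functions are pointwise limits from below of
bounded continuous functions. -/
lemma exists_lsc_approx {X : Type*} [MetricSpace X] (f : X → ℝ) (hf : LowerSemicontinuous f)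
    (h0 : ∀ x, 0 ≤ f x) :
    ∃ g : ℕ → X → ℝ, (∀ n, Continuous (g n)) ∧ (∀ n x, 0 ≤ g n x) ∧ (∀ n x, g n x ≤ n) ∧
      (∀ n x, g n x ≤ f x) ∧ ∀ x, Tendsto (fun n => g n x) atTop (𝓝 (f x)) := by
  have hbdd : ∀ (n : ℕ) (x : X), BddBelow (Set.range fun y => f y + n * dist x y) := by
    intro n x
    refine ⟨0, ?_⟩
    rintro _ ⟨y, rfl⟩
    have := h0 y
    positivity
  have hle : ∀ (n : ℕ) (x : X), (⨅ y, (f y + n * dist x y)) ≤ f x := by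
    intro n x
    have := ciInf_le (hbdd n x) x
    simpa using this
  refine ⟨fun n x => min (n : ℝ) (⨅ y, (f y + n * dist x y)), ?_, ?_, ?_, ?_, ?_⟩
  · intro n
    refine continuous_const.min ?_
    have : LipschitzWith (n : NNReal) (fun x => ⨅ y, (f y + n * dist x y)) := by
      refine LipschitzWith.of_le_add_mul _ ?_
      intro x z
      have : Nonempty X := ⟨x⟩
      rw [← sub_le_iff_le_add]
      refine le_ciInf fun y => ?_
      have h1 := ciInf_le (hbdd n x) y
      have h2 : (n : ℝ) * dist x y ≤ n * (dist x z + dist z y) :=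
        mul_le_mul_of_nonneg_left (dist_triangle x z y) (by positivity)
      simp only [NNReal.coe_natCast]
      linarith
    exact this.continuous
  · intro n x
    refine le_min (by positivity) ?_
    refine Real.iInf_nonneg fun y => ?_
    have := h0 y
    positivity
  · intro n x; exact min_le_left _ _
  · intro n x; exact (min_le_right _ _).trans (hle n x)
  · intro x
    have : Nonempty X := ⟨x⟩
    rw [tendsto_order]
    constructor
    · intro c hc
      obtain ⟨c', hc1, hc2⟩ := exists_between hc
      obtain ⟨δ, hδ, hb⟩ := Metric.eventually_nhds_iff.1 (hf x c' hc2)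
      filter_upwards [tendsto_natCast_atTop_atTop.eventually_ge_atTop (c' : ℝ),
        tendsto_natCast_atTop_atTop.eventually_ge_atTop (c' / δ : ℝ)] with n hn1 hn2
      refine lt_of_lt_of_le hc1 (le_min hn1 (le_ciInf fun y => ?_))
      rcases lt_or_ge (dist y x) δ with h | h
      · have h1 := hb h
        have : 0 ≤ (n : ℝ) * dist x y := by positivity
        linarith
      · rw [div_le_iff₀ hδ] at hn2
        have : (n : ℝ) * δ ≤ n * dist x y := by
          rw [dist_comm x y]
          exact mul_le_mul_of_nonneg_left h (by positivity)
        have := h0 y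
        linarith
    · intro c hc
      exact Eventually.of_forall fun n => lt_of_le_of_lt ((min_le_right _ _).trans (hle n x)) hc

/-- Integrals of nonnegative lsc functions are lsc in the kernel parameter. -/
lemma lsc_integral_nonneg {X Y : Type*} [MetricSpace X] [MeasurableSpace X] [BorelSpace X]
    [TopologicalSpace Y] [MeasurableSpace Y]
    (Q : Kernel Y X) [IsMarkovKernel Q] (K : Set Y)
    (hQweak : ∀ g : X → ℝ, Continuous g → (∃ b, ∀ y, |g y| ≤ b) →
      ContinuousOn (fun p : Y => ∫ y, g y ∂(Q p)) K)
    (f : X → ℝ) (hf : LowerSemicontinuous f) (h0 : ∀ x, 0 ≤ f x)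
    (hint : ∀ p ∈ K, Integrable f (Q p)) :
    LowerSemicontinuousOn (fun p => ∫ y, f y ∂(Q p)) K := by
  obtain ⟨g, hg, hg0, hgn, hgf, hglim⟩ := exists_lsc_approx f hf h0
  have hgi : ∀ n, ∀ p ∈ K, Integrable (g n) (Q p) := by
    intro n p hp
    refine (hint p hp).mono (hg n).measurable.aestronglyMeasurable (Eventually.of_forall fun x => ?_)
    rw [Real.norm_of_nonneg (hg0 n x), Real.norm_of_nonneg (h0 x)]
    exact hgf n x
  intro p hp c hc
  have hlim : Tendsto (fun n => ∫ y, g n y ∂(Q p)) atTop (𝓝 (∫ y, f y ∂(Q p))) := by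
    refine tendsto_integral_of_dominated_convergence f
      (fun n => (hg n).measurable.aestronglyMeasurable) (hint p hp) ?_ ?_
    · intro n
      refine Eventually.of_forall fun x => ?_
      rw [Real.norm_of_nonneg (hg0 n x)]
      exact hgf n x
    · exact Eventually.of_forall hglim
  obtain ⟨n, hn⟩ := (hlim.eventually_const_lt hc).exists
  have hcont := hQweak (g n) (hg n) ⟨n, fun y => by rw [abs_of_nonneg (hg0 n y)]; exact hgn n y⟩ p hp
  filter_upwards [hcont.eventually_const_lt hn, self_mem_nhdsWithin] with q hq hqK
  exact lt_of_lt_of_le hq (integral_mono (hgi n q hqK) (hint q hqK) (hgf n))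

/-- Integrals of lsc functions of finite weighted norm are lsc in the kernel parameter. -/
lemma lsc_integral_weight {X Y : Type*} [MetricSpace X] [MeasurableSpace X] [BorelSpace X]
    [TopologicalSpace Y] [MeasurableSpace Y]
    (Q : Kernel Y X) [IsMarkovKernel Q] (K : Set Y)
    (hQweak : ∀ g : X → ℝ, Continuous g → (∃ b, ∀ y, |g y| ≤ b) →
      ContinuousOn (fun p : Y => ∫ y, g y ∂(Q p)) K)
    (W : X → ℝ) (hWcont : Continuous W)
    (hWint : ∀ p ∈ K, Integrable W (Q p))
    (hQWcont : ContinuousOn (fun p : Y => ∫ y, W y ∂(Q p)) K)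
    (u : X → ℝ) (hu : LowerSemicontinuous u) (N : ℝ) (hN : ∀ x, |u x| ≤ N * W x)
    (hint : ∀ p ∈ K, Integrable u (Q p)) :
    LowerSemicontinuousOn (fun p => ∫ y, u y ∂(Q p)) K := by
  have h1 := lsc_integral_nonneg Q K hQweak (fun x => u x + N * W x)
    (hu.add (continuous_const.mul hWcont).lowerSemicontinuous)
    (fun x => by have := neg_abs_le (u x); have := hN x; linarith)
    (fun p hp => (hint p hp).add ((hWint p hp).const_mul N))
  have h2 : LowerSemicontinuousOn (fun p => -(N * ∫ y, W y ∂(Q p))) K :=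
    (continuousOn_const.mul hQWcont).neg.lowerSemicontinuousOn
  intro p hp c hc
  have h3 := (h1.add h2) p hp c
  have key : ∀ q ∈ K, ∫ y, (u y + N * W y) ∂(Q q) + -(N * ∫ y, W y ∂(Q q)) = ∫ y, u y ∂(Q q) := by
    intro q hq
    rw [integral_add (hint q hq) ((hWint q hq).const_mul N), integral_const_mul]
    ring
  filter_upwards [h3 (by simpa only [key p hp] using hc), self_mem_nhdsWithin] with q hq hqK
  simpa only [key q hqK] using hq

/-- Berge-type lemma: infimum over an usc compact-valued multifunction of an lsc function. -/
lemma lsc_sInf_usc {X A : Type*} [TopologicalSpace X] [TopologicalSpace A]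
    (Adm : X → Set A) (hAne : ∀ x, (Adm x).Nonempty)
    (hAcomp : ∀ x, IsCompact (Adm x))
    (hAusc : ∀ x, ∀ U : Set A, IsOpen U → Adm x ⊆ U → ∀ᶠ x' in 𝓝 x, Adm x' ⊆ U)
    (h : X × A → ℝ) (hlsc : LowerSemicontinuousOn h {p : X × A | p.2 ∈ Adm p.1})
    (hbdd : ∀ x, BddBelow ((fun a => h (x, a)) '' Adm x)) :
    LowerSemicontinuous (fun x => sInf ((fun a => h (x, a)) '' Adm x)) := by
  intro x c hc
  obtain ⟨c', hc1, hc2⟩ := exists_between hc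
  have hmem : {p : X × A | p.2 ∈ Adm p.1 → c' < h p} ∈ 𝓝ˢ ({x} ×ˢ Adm x) := by
    rw [mem_nhdsSet_iff_forall]
    rintro ⟨x', a⟩ ⟨hx', ha⟩
    obtain rfl : x' = x := hx'
    have : c' < h (x', a) := lt_of_lt_of_le hc2 (csInf_le (hbdd x') ⟨a, ha, rfl⟩)
    exact eventually_nhdsWithin_iff.1 (hlsc (x', a) ha c' this)
  obtain ⟨O, hO1, hO2, hO3⟩ := mem_nhdsSet_iff_exists.1 hmem
  obtain ⟨u, v, hu, hv, hxu, hAv, huv⟩ :=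
    generalized_tube_lemma isCompact_singleton (hAcomp x) hO1 hO2
  filter_upwards [hu.mem_nhds (hxu rfl), hAusc x v hv hAv] with x' hx' hAx'
  refine lt_of_lt_of_le hc1 (le_csInf ((hAne x').image _) ?_)
  rintro _ ⟨a, ha, rfl⟩
  exact (hO3 (huv ⟨hx', hAx' ha⟩) ha).le

/-- Finite weighted norm means a pointwise weighted bound. -/
lemma WNorm_lt_top_iff {X : Type*} (W u : X → ℝ) (hW1 : ∀ x, 1 ≤ W x) :
    WNorm W u < ⊤ ↔ ∃ N : ℝ, 0 ≤ N ∧ ∀ x, |u x| ≤ N * W x := by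
  unfold WNorm
  constructor
  · intro h
    refine ⟨(⨆ x, ENNReal.ofReal (|u x| / W x)).toReal, ENNReal.toReal_nonneg, fun x => ?_⟩
    have hx : 0 < W x := by linarith [hW1 x]
    rw [← div_le_iff₀ hx]
    exact (ENNReal.ofReal_le_iff_le_toReal h.ne).1
      (le_iSup (fun x => ENNReal.ofReal (|u x| / W x)) x)
  · rintro ⟨N, _, hN⟩
    refine lt_of_le_of_lt (iSup_le fun x => ?_) (ENNReal.ofReal_lt_top (r := N))
    have hx : 0 < W x := by linarith [hW1 x]
    exact ENNReal.ofReal_le_ofReal ((div_le_iff₀ hx).2 (hN x))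

lemma le_of_forall_geom {a b c r : ℝ} (hr0 : 0 ≤ r) (hr : r < 1)
    (h : ∀ n : ℕ, a ≤ b + c * r ^ n) : a ≤ b := by
  have : Tendsto (fun n : ℕ => b + c * r ^ n) atTop (𝓝 (b + c * 0)) :=
    ((tendsto_pow_atTop_nhds_zero_of_lt_one hr0 hr).const_mul c).const_add b
  have := ge_of_tendsto' this h
  simpa using this

/-- Under the growth conditions (GC) and the compactness-continuity conditions
(CC), the dynamic programming operator `T` has a unique fixed point `v*` in the
class of lower semicontinuous functions of finite `W`-norm (the optimality
equation). -/
theorem optimality_equation_unique {X A : Type*}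
    [MetricSpace X] [PolishSpace X] [MeasurableSpace X] [BorelSpace X]
    [MetricSpace A] [PolishSpace A] [MeasurableSpace A] [BorelSpace A]
    (Adm : X → Set A) (hAne : ∀ x, (Adm x).Nonempty)
    (hKmeas : MeasurableSet {p : X × A | p.2 ∈ Adm p.1})
    (Q : Kernel (X × A) X) [IsMarkovKernel Q]
    (C : X × A → ℝ) (hCmeas : Measurable C)
    (α : ℝ) (hα0 : 0 < α) (hα1 : α < 1)
    (M β : ℝ) (hM : 0 < M) (hβ : 1 < β)
    (W : X → ℝ) (hWmeas : Measurable W) (hW1 : ∀ x, 1 ≤ W x)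
    (hCW : ∀ x, ∀ a ∈ Adm x, |C (x, a)| ≤ M * W x)
    (hQW : ∀ x, ∀ a ∈ Adm x,
      ∫⁻ y, ENNReal.ofReal (W y) ∂(Q (x, a)) ≤ ENNReal.ofReal (β * W x))
    (hγ : α * β < 1)
    (hAcomp : ∀ x, IsCompact (Adm x))
    (hAusc : ∀ x, ∀ U : Set A, IsOpen U → Adm x ⊆ U → ∀ᶠ x' in 𝓝 x, Adm x' ⊆ U)
    (hClsc : LowerSemicontinuousOn C {p : X × A | p.2 ∈ Adm p.1})
    (hQweak : ∀ g : X → ℝ, Continuous g → (∃ b, ∀ y, |g y| ≤ b) →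
      ContinuousOn (fun p : X × A => ∫ y, g y ∂(Q p)) {p : X × A | p.2 ∈ Adm p.1})
    (hWcont : Continuous W)
    (hQWcont : ContinuousOn (fun p : X × A => ∫ y, W y ∂(Q p))
      {p : X × A | p.2 ∈ Adm p.1})
    : ∃! vstar : X → ℝ, LowerSemicontinuous vstar ∧ WNorm W vstar < ⊤ ∧
        ∀ x, vstar x = Tbell Adm Q C α vstar x := by
  set K : Set (X × A) := {p : X × A | p.2 ∈ Adm p.1} with hK
  have hW0 : ∀ x, 0 ≤ W x := fun x => zero_le_one.trans (hW1 x)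
  have hγ0 : 0 ≤ α * β := by positivity
  have hWint : ∀ p ∈ K, Integrable W (Q p) := by
    rintro ⟨x, a⟩ ha
    refine ⟨hWmeas.aestronglyMeasurable, ?_⟩
    rw [hasFiniteIntegral_iff_ofReal (Eventually.of_forall hW0)]
    exact (hQW x a ha).trans_lt ENNReal.ofReal_lt_top
  have hWle : ∀ x, ∀ a ∈ Adm x, ∫ y, W y ∂(Q (x, a)) ≤ β * W x := by
    intro x a ha
    rw [integral_eq_lintegral_of_nonneg_ae (Eventually.of_forall hW0) hWmeas.aestronglyMeasurable]
    have : 0 ≤ β * W x := mul_nonneg (by linarith) (hW0 x)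
    exact ENNReal.toReal_le_of_le_ofReal this (hQW x a ha)
  have hint : ∀ u : X → ℝ, Measurable u → ∀ N : ℝ, (∀ x, |u x| ≤ N * W x) →
      ∀ p ∈ K, Integrable u (Q p) := by
    intro u hu N hN p hp
    exact ((hWint p hp).const_mul N).mono' hu.aestronglyMeasurable (Eventually.of_forall hN)
  -- integral bound
  have hintle : ∀ u : X → ℝ, ∀ N : ℝ, 0 ≤ N → (∀ x, |u x| ≤ N * W x) →
      ∀ x, ∀ a ∈ Adm x, |∫ y, u y ∂(Q (x, a))| ≤ N * (β * W x) := by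
    intro u N hN0 hN x a ha
    have h1 := norm_integral_le_of_norm_le (f := u) ((hWint (x, a) ha).const_mul N)
      (Eventually.of_forall hN)
    rw [integral_const_mul] at h1
    exact h1.trans (mul_le_mul_of_nonneg_left (hWle x a ha) hN0)
  have hbound : ∀ u : X → ℝ, ∀ N : ℝ, 0 ≤ N → (∀ x, |u x| ≤ N * W x) →
      ∀ x, ∀ a ∈ Adm x, |C (x, a) + α * ∫ y, u y ∂(Q (x, a))| ≤ (M + α * β * N) * W x := by
    intro u N hN0 hN x a ha
    have h1 := hCW x a ha
    have h2 := mul_le_mul_of_nonneg_left (hintle u N hN0 hN x a ha) hα0.le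
    have h3 := abs_add_le (C (x, a)) (α * ∫ y, u y ∂(Q (x, a)))
    rw [abs_mul, abs_of_pos hα0] at h3
    linarith
  have hbdd : ∀ u : X → ℝ, ∀ N : ℝ, 0 ≤ N → (∀ x, |u x| ≤ N * W x) →
      ∀ x, BddBelow ((fun a => C (x, a) + α * ∫ y, u y ∂(Q (x, a))) '' Adm x) := by
    intro u N hN0 hN x
    refine ⟨-((M + α * β * N) * W x), ?_⟩
    rintro _ ⟨a, ha, rfl⟩
    exact (abs_le.1 (hbound u N hN0 hN x a ha)).1
  have hTlsc : ∀ u : X → ℝ, LowerSemicontinuous u → ∀ N : ℝ, 0 ≤ N → (∀ x, |u x| ≤ N * W x) →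
      LowerSemicontinuous (Tbell Adm Q C α u) := by
    intro u hu N hN0 hN
    refine lsc_sInf_usc Adm hAne hAcomp hAusc (fun p => C p + α * ∫ y, u y ∂(Q p)) ?_
      (hbdd u N hN0 hN)
    refine hClsc.add ?_
    have := lsc_integral_weight Q K hQweak W hWcont hWint hQWcont u hu N hN
      (hint u hu.measurable N hN)
    exact (continuous_const_mul α).comp_lowerSemicontinuousOn this
      (fun a b hab => mul_le_mul_of_nonneg_left hab hα0.le)
  have hTle : ∀ u v : X → ℝ, Measurable u → Measurable v → ∀ N₁ N₂ D : ℝ, 0 ≤ N₁ → 0 ≤ N₂ →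
      0 ≤ D → (∀ x, |u x| ≤ N₁ * W x) → (∀ x, |v x| ≤ N₂ * W x) →
      (∀ x, |u x - v x| ≤ D * W x) →
      ∀ x, Tbell Adm Q C α u x ≤ Tbell Adm Q C α v x + α * β * D * W x := by
    intro u v hu hv N₁ N₂ D hN₁ hN₂ hD h1 h2 h3 x
    rw [← sub_le_iff_le_add]
    refine le_csInf ((hAne x).image _) ?_
    rintro _ ⟨a, ha, rfl⟩
    have h4 : Tbell Adm Q C α u x ≤ C (x, a) + α * ∫ y, u y ∂(Q (x, a)) :=
      csInf_le (hbdd u N₁ hN₁ h1 x) ⟨a, ha, rfl⟩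
    have h5 := (le_abs_self _).trans (hintle (fun y => u y - v y) D hD h3 x a ha)
    rw [integral_sub (hint u hu N₁ h1 (x, a) ha) (hint v hv N₂ h2 (x, a) ha)] at h5
    have h6 := mul_le_mul_of_nonneg_left h5 hα0.le
    simp only
    linarith
  have hTcontr : ∀ u v : X → ℝ, Measurable u → Measurable v → ∀ N₁ N₂ D : ℝ, 0 ≤ N₁ → 0 ≤ N₂ →
      0 ≤ D → (∀ x, |u x| ≤ N₁ * W x) → (∀ x, |v x| ≤ N₂ * W x) →
      (∀ x, |u x - v x| ≤ D * W x) →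
      ∀ x, |Tbell Adm Q C α u x - Tbell Adm Q C α v x| ≤ α * β * D * W x := by
    intro u v hu hv N₁ N₂ D hN₁ hN₂ hD h1 h2 h3 x
    have h4 := hTle u v hu hv N₁ N₂ D hN₁ hN₂ hD h1 h2 h3 x
    have h5 := hTle v u hv hu N₂ N₁ D hN₂ hN₁ hD h2 h1
      (fun x => by rw [abs_sub_comm]; exact h3 x) x
    rw [abs_le]
    constructor <;> linarith
  have hTbound : ∀ u : X → ℝ, ∀ N : ℝ, 0 ≤ N → (∀ x, |u x| ≤ N * W x) →
      ∀ x, |Tbell Adm Q C α u x| ≤ (M + α * β * N) * W x := by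
    intro u N hN0 hN x
    rw [abs_le]
    constructor
    · refine le_csInf ((hAne x).image _) ?_
      rintro _ ⟨a, ha, rfl⟩
      exact (abs_le.1 (hbound u N hN0 hN x a ha)).1
    · obtain ⟨a, ha⟩ := hAne x
      have h4 : Tbell Adm Q C α u x ≤ C (x, a) + α * ∫ y, u y ∂(Q (x, a)) :=
        csInf_le (hbdd u N hN0 hN x) ⟨a, ha, rfl⟩
      exact h4.trans (abs_le.1 (hbound u N hN0 hN x a ha)).2
  -- value iteration
  let T : (X → ℝ) → (X → ℝ) := Tbell Adm Q C α
  let U : ℕ → X → ℝ := fun n => T^[n] (fun _ => 0)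
  have hUs : ∀ n, U (n + 1) = T (U n) := fun n => Function.iterate_succ_apply' T n _
  have hU0 : U 0 = fun _ => 0 := rfl
  have hU : ∀ n, LowerSemicontinuous (U n) ∧ ∃ N : ℝ, 0 ≤ N ∧ ∀ x, |U n x| ≤ N * W x := by
    intro n
    induction n with
    | zero =>
      refine ⟨by rw [hU0]; exact lowerSemicontinuous_const, 0, le_rfl, fun x => ?_⟩
      simp [hU0]
    | succ n ih =>
      obtain ⟨h1, N, hN0, hN⟩ := ih
      rw [hUs]
      exact ⟨hTlsc _ h1 N hN0 hN, M + α * β * N, by positivity, hTbound _ N hN0 hN⟩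
  have hUd : ∀ n x, |U n x - U (n + 1) x| ≤ (M * (α * β) ^ n) * W x := by
    intro n
    induction n with
    | zero =>
      intro x
      have := hTbound (fun _ => 0) 0 le_rfl (fun x => by simp) x
      rw [hUs, hU0]
      simpa using this
    | succ n ih =>
      intro x
      obtain ⟨h1, N₁, hN₁, h1'⟩ := hU n
      obtain ⟨h2, N₂, hN₂, h2'⟩ := hU (n + 1)
      have := hTcontr (U n) (U (n + 1)) h1.measurable h2.measurable N₁ N₂ (M * (α * β) ^ n)
        hN₁ hN₂ (by positivity) h1' h2' ih x
      rw [hUs (n + 1), hUs n]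
      rw [hUs n] at this
      refine this.trans_eq ?_
      ring
  have hUd' : ∀ x n, dist (U n x) (U (n + 1) x) ≤ (M * W x) * (α * β) ^ n := by
    intro x n
    rw [Real.dist_eq]
    refine (hUd n x).trans_eq ?_
    ring
  have hlim : ∀ x, ∃ l, Tendsto (fun n => U n x) atTop (𝓝 l) := fun x =>
    cauchySeq_tendsto_of_complete (cauchySeq_of_le_geometric (α * β) (M * W x) hγ (hUd' x))
  choose v hv using hlim
  have h1γ : 0 < 1 - α * β := by linarith
  obtain ⟨E, hE⟩ : ∃ E, E = M / (1 - α * β) := ⟨_, rfl⟩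
  have hE0 : 0 ≤ E := by rw [hE]; positivity
  have hUv : ∀ n x, |U n x - v x| ≤ (E * (α * β) ^ n) * W x := by
    intro n x
    have := dist_le_of_le_geometric_of_tendsto (α * β) (M * W x) hγ (hUd' x) (hv x) n
    rw [Real.dist_eq] at this
    refine this.trans_eq ?_
    rw [hE]; ring
  have hvN : ∀ x, |v x| ≤ E * W x := by
    intro x
    have := hUv 0 x
    simpa [hU0] using this
  have hvlsc : LowerSemicontinuous v := by
    intro x c hc
    have h1 : Tendsto (fun n => U n x + -((E * (α * β) ^ n) * W x)) atTop
        (𝓝 (v x + -((E * 0) * W x))) :=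
      (hv x).add (((tendsto_pow_atTop_nhds_zero_of_lt_one hγ0 hγ).const_mul E).mul_const (W x)).neg
    simp only [mul_zero, zero_mul, neg_zero, add_zero] at h1
    obtain ⟨n, hn⟩ := (h1.eventually_const_lt hc).exists
    have h2 : LowerSemicontinuous (fun x => U n x + -((E * (α * β) ^ n) * W x)) :=
      (hU n).1.add (continuous_const.mul hWcont).neg.lowerSemicontinuous
    filter_upwards [h2 x c hn] with y hy
    have := (abs_le.1 (hUv n y)).2
    linarith
  have hfix : ∀ x, v x = Tbell Adm Q C α v x := by
    intro x
    have key : |v x - Tbell Adm Q C α v x| ≤ 0 := by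
      refine le_of_forall_geom (c := 2 * E * W x) hγ0 hγ fun n => ?_
      obtain ⟨h1, N₁, hN₁, h1'⟩ := hU n
      have h2 := hTcontr (U n) v h1.measurable hvlsc.measurable N₁ E (E * (α * β) ^ n)
        hN₁ hE0 (by positivity) h1' hvN (hUv n) x
      have h3 := hUv (n + 1) x
      rw [hUs n] at h3
      have h4 := abs_sub_le (v x) (T (U n) x) (Tbell Adm Q C α v x)
      rw [abs_sub_comm (v x) (T (U n) x)] at h4
      have h5 : α * β * (E * (α * β) ^ n * W x) ≤ 1 * (E * (α * β) ^ n * W x) :=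
        mul_le_mul_of_nonneg_right hγ.le (mul_nonneg (by positivity) (hW0 x))
      have h6 : E * (α * β) ^ (n + 1) * W x = α * β * (E * (α * β) ^ n * W x) := by ring
      have h7 : α * β * (E * (α * β) ^ n) * W x = α * β * (E * (α * β) ^ n * W x) := by ring
      rw [h6] at h3
      rw [h7] at h2
      have h8 : |T (U n) x - Tbell Adm Q C α v x| ≤ α * β * (E * (α * β) ^ n * W x) := h2
      linarith
    have := abs_nonpos_iff.1 key
    linarith
  refine ⟨v, ⟨hvlsc, (WNorm_lt_top_iff W v hW1).2 ⟨E, hE0, hvN⟩, hfix⟩, ?_⟩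
  rintro w ⟨hwlsc, hwN, hwfix⟩
  obtain ⟨N, hN0, hN⟩ := (WNorm_lt_top_iff W w hW1).1 hwN
  have hd : ∀ n : ℕ, ∀ x, |w x - v x| ≤ ((N + E) * (α * β) ^ n) * W x := by
    intro n
    induction n with
    | zero =>
      intro x
      have h1 := abs_sub (w x) (v x)
      have h2 := hN x
      have h3 := hvN x
      simp only [pow_zero, mul_one]
      linarith
    | succ n ih =>
      intro x
      have := hTcontr w v hwlsc.measurable hvlsc.measurable N E _ hN0 hE0
        (by positivity) hN hvN ih x
      rw [← hwfix x, ← hfix x] at this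
      refine this.trans_eq ?_
      ring
  funext x
  have : |w x - v x| ≤ 0 := le_of_forall_geom (c := (N + E) * W x) hγ0 hγ fun n => by
    refine (hd n x).trans_eq ?_
    ring
  linarith [abs_nonpos_iff.1 this]
end

section
/- Assume the growth conditions (GC) and the compactness-continuity conditions (CC). Let g₀ be a measurable selector and v₀ := V_{g₀}, and let v₀^e be the lower semicontinuous envelope of v₀. Then v₀^e(x) ≥ T(v₀^e)(x) for all x ∈ X. -/
open MeasureTheory ProbabilityTheory Filter Topology
open scoped ENNReal

/-- The lower semicontinuous envelope of `u : X → ℝ`, computed in the extended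
reals: `uᵉ(x) = sup_{r>0} inf_{y ∈ B_r(x)} u(y)`. -/
noncomputable def lscEnvE {X : Type*} [MetricSpace X] (u : X → ℝ) (x : X) : EReal :=
  ⨆ r ∈ Set.Ioi (0 : ℝ), ⨅ y ∈ Metric.ball x r, (u y : EReal)

/-- A nonnegative lower semicontinuous function is an increasing limit of bounded
continuous functions (Moreau-Yosida / Baire regularisation). -/
lemma lsc_approx {X : Type*} [MetricSpace X] (w : X → ℝ) (hw : LowerSemicontinuous w)
    (hw0 : ∀ x, 0 ≤ w x) :
    ∃ g : ℕ → X → ℝ, (∀ n, Continuous (g n)) ∧ (∀ n x, 0 ≤ g n x) ∧ (∀ n x, g n x ≤ n) ∧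
      (∀ x, Monotone fun n => g n x) ∧ (∀ n x, g n x ≤ w x) ∧
      (∀ x c, c < w x → ∃ n, c < g n x) := by
  have hpos : ∀ (n : ℕ) (x y : X), 0 ≤ min (w y) n + n * dist x y := fun n x y => by
    have := hw0 y
    positivity
  have hbdd : ∀ (n : ℕ) (x : X), BddBelow (Set.range fun y => min (w y) n + n * dist x y) :=
    fun n x => ⟨0, by rintro _ ⟨y, rfl⟩; exact hpos n x y⟩
  have hself : ∀ (n : ℕ) (x : X), (⨅ y, (min (w y) n + n * dist x y)) ≤ min (w x) n :=
    fun n x => by simpa using ciInf_le (hbdd n x) x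
  refine ⟨fun n x => ⨅ y, (min (w y) n + n * dist x y), ?_, ?_, ?_, ?_, ?_, ?_⟩
  · intro n
    refine (LipschitzWith.of_le_add_mul' (n : ℝ) fun x z => ?_).continuous
    have : Nonempty X := ⟨x⟩
    rw [← sub_le_iff_le_add]
    refine le_ciInf fun y => ?_
    rw [sub_le_iff_le_add]
    refine (ciInf_le (hbdd n x) y).trans ?_
    have := dist_triangle x z y
    have hn : (0 : ℝ) ≤ n := n.cast_nonneg
    nlinarith
  · intro n x
    exact Real.iInf_nonneg fun y => hpos n x y
  · intro n x
    exact (hself n x).trans (min_le_right _ _)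
  · intro x m n hmn
    have : Nonempty X := ⟨x⟩
    refine le_ciInf fun y => (ciInf_le (hbdd m x) y).trans ?_
    have : (m : ℝ) ≤ n := by exact_mod_cast hmn
    gcongr
  · intro n x
    exact (hself n x).trans (min_le_left _ _)
  · intro x c hc
    have : Nonempty X := ⟨x⟩
    obtain ⟨c', hc1, hc2⟩ := exists_between hc
    obtain ⟨δ, hδ, hb⟩ := Metric.eventually_nhds_iff.1 (hw x c' hc2)
    obtain ⟨n, hn⟩ := exists_nat_ge (max c' (c' / δ))
    refine ⟨n, hc1.trans_le (le_ciInf fun y => ?_)⟩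
    have h1 : c' ≤ n := (le_max_left _ _).trans hn
    have h2 : c' ≤ n * δ := (div_le_iff₀ hδ).1 ((le_max_right _ _).trans hn)
    have hn0 : (0 : ℝ) ≤ n := n.cast_nonneg
    by_cases hy : dist y x < δ
    · have h3 : c' ≤ min (w y) n := le_min (hb hy).le h1
      have : 0 ≤ n * dist x y := by positivity
      linarith
    · rw [dist_comm] at hy
      push Not at hy
      have : 0 ≤ min (w y) n := le_min (hw0 y) hn0
      nlinarith

/-- Weak continuity of a kernel implies lower semicontinuity of integrals of nonnegative
lower semicontinuous functions. -/
lemma lsc_lintegral {X Y : Type*} [MetricSpace X] [MeasurableSpace X] [BorelSpace X]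
    [TopologicalSpace Y] [MeasurableSpace Y] (Q : Kernel Y X) [IsMarkovKernel Q] (K : Set Y)
    (hQ : ∀ g : X → ℝ, Continuous g → (∃ b, ∀ y, |g y| ≤ b) →
      ContinuousOn (fun p : Y => ∫ y, g y ∂(Q p)) K)
    (w : X → ℝ) (hw : LowerSemicontinuous w) (hw0 : ∀ x, 0 ≤ w x) :
    LowerSemicontinuousOn (fun p => ∫⁻ y, ENNReal.ofReal (w y) ∂(Q p)) K := by
  obtain ⟨g, hgc, hg0, hgn, hgm, hgw, hgs⟩ := lsc_approx w hw hw0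
  have hsup : ∀ y, ENNReal.ofReal (w y) = ⨆ n, ENNReal.ofReal (g n y) := by
    intro y
    refine le_antisymm (le_of_forall_lt fun c hc => ?_)
      (iSup_le fun n => ENNReal.ofReal_le_ofReal (hgw n y))
    have hct : c ≠ ⊤ := hc.ne_top
    obtain ⟨n, hn⟩ := hgs y c.toReal ((ENNReal.lt_ofReal_iff_toReal_lt hct).1 hc)
    exact lt_iSup_iff.2 ⟨n, (ENNReal.lt_ofReal_iff_toReal_lt hct).2 hn⟩
  have heq : (fun p => ∫⁻ y, ENNReal.ofReal (w y) ∂(Q p)) =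
      fun p => ⨆ n, ENNReal.ofReal (∫ y, g n y ∂(Q p)) := by
    funext p
    simp_rw [hsup]
    rw [lintegral_iSup (fun n => (hgc n).measurable.ennreal_ofReal)
      (fun m n hmn y => ENNReal.ofReal_le_ofReal (hgm y hmn))]
    congr 1
    funext n
    rw [ofReal_integral_eq_lintegral_ofReal _ (ae_of_all _ (hg0 n))]
    exact Integrable.of_bound (hgc n).measurable.aestronglyMeasurable n
      (ae_of_all _ fun y => by rw [Real.norm_eq_abs, abs_of_nonneg (hg0 n y)]; exact hgn n y)
  rw [heq]
  refine lowerSemicontinuousOn_iSup fun n => ContinuousOn.lowerSemicontinuousOn ?_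
  exact ENNReal.continuous_ofReal.comp_continuousOn
    (hQ (g n) (hgc n) ⟨n, fun y => by rw [abs_of_nonneg (hg0 n y)]; exact hgn n y⟩)

/-- Under (GC) and (CC), for any measurable selector `g₀` with value function
`v₀ = V_{g₀}` and lower semicontinuous envelope `v₀ᵉ`, one has `v₀ᵉ ≥ T(v₀ᵉ)`
pointwise (Lemma 1(a) of the paper). -/
theorem envelope_superharmonic {X A : Type*}
    [MetricSpace X] [PolishSpace X] [MeasurableSpace X] [BorelSpace X]
    [MetricSpace A] [PolishSpace A] [MeasurableSpace A] [BorelSpace A]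
    (Adm : X → Set A) (hAne : ∀ x, (Adm x).Nonempty)
    (hKmeas : MeasurableSet {p : X × A | p.2 ∈ Adm p.1})
    (Q : Kernel (X × A) X) [IsMarkovKernel Q]
    (C : X × A → ℝ) (hCmeas : Measurable C)
    (α : ℝ) (hα0 : 0 < α) (hα1 : α < 1)
    (M β : ℝ) (hM : 0 < M) (hβ : 1 < β)
    (W : X → ℝ) (hWmeas : Measurable W) (hW1 : ∀ x, 1 ≤ W x)
    (hCW : ∀ x, ∀ a ∈ Adm x, |C (x, a)| ≤ M * W x)
    (hQW : ∀ x, ∀ a ∈ Adm x,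
      ∫⁻ y, ENNReal.ofReal (W y) ∂(Q (x, a)) ≤ ENNReal.ofReal (β * W x))
    (hγ : α * β < 1)
    (hAcomp : ∀ x, IsCompact (Adm x))
    (hAusc : ∀ x, ∀ U : Set A, IsOpen U → Adm x ⊆ U → ∀ᶠ x' in 𝓝 x, Adm x' ⊆ U)
    (hClsc : LowerSemicontinuousOn C {p : X × A | p.2 ∈ Adm p.1})
    (hQweak : ∀ g : X → ℝ, Continuous g → (∃ b, ∀ y, |g y| ≤ b) →
      ContinuousOn (fun p : X × A => ∫ y, g y ∂(Q p)) {p : X × A | p.2 ∈ Adm p.1})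
    (hWcont : Continuous W)
    (hQWcont : ContinuousOn (fun p : X × A => ∫ y, W y ∂(Q p))
      {p : X × A | p.2 ∈ Adm p.1})
    (g₀ : X → A) (hg₀ : Measurable g₀) (hg₀sel : ∀ x, g₀ x ∈ Adm x)
    (v₀ : X → ℝ) (hv₀meas : Measurable v₀) (hv₀W : WNorm W v₀ < ⊤)
    (hv₀fix : ∀ x, v₀ x = C (x, g₀ x) + α * ∫ y, v₀ y ∂(Q (x, g₀ x)))
    (e : X → ℝ) (hE : ∀ x, (e x : EReal) = lscEnvE v₀ x)
    : ∀ x, Tbell Adm Q C α e x ≤ e x := by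
  classical
  set K : Set (X × A) := {p : X × A | p.2 ∈ Adm p.1} with hK
  -- the bound on v₀
  obtain ⟨B, hB0, hB⟩ : ∃ B : ℝ, 0 ≤ B ∧ ∀ x, |v₀ x| ≤ B * W x := by
    refine ⟨(WNorm W v₀).toReal, ENNReal.toReal_nonneg, fun x => ?_⟩
    have h1 : ENNReal.ofReal (|v₀ x| / W x) ≤ WNorm W v₀ :=
      le_iSup (fun x => ENNReal.ofReal (|v₀ x| / W x)) x
    have h2 := (ENNReal.ofReal_le_iff_le_toReal hv₀W.ne).1 h1
    exact (div_le_iff₀ (by linarith [hW1 x])).1 h2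
  -- basic facts on the envelope
  have hE1 : ∀ x c, c < e x → ∃ r > 0, ∀ y ∈ Metric.ball x r, c < v₀ y := by
    intro x c hc
    have h : (c : EReal) < lscEnvE v₀ x := by
      rw [← hE x]; exact_mod_cast hc
    unfold lscEnvE at h
    obtain ⟨r, h⟩ := lt_iSup_iff.1 h
    obtain ⟨hr, h⟩ := lt_iSup_iff.1 h
    refine ⟨r, hr, fun y hy => ?_⟩
    have h3 : (c : EReal) < (v₀ y : EReal) := h.trans_le (iInf₂_le y hy)
    exact_mod_cast h3
  have hE2 : ∀ x c r, 0 < r → (∀ y ∈ Metric.ball x r, c ≤ v₀ y) → c ≤ e x := by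
    intro x c r hr h
    have h3 : (c : EReal) ≤ (e x : EReal) := by
      rw [hE x]
      unfold lscEnvE
      refine le_trans ?_ (le_iSup₂ (f := fun (r : ℝ) (_ : r ∈ Set.Ioi (0 : ℝ)) =>
        ⨅ y ∈ Metric.ball x r, (v₀ y : EReal)) r hr)
      exact le_iInf₂ fun y hy => by exact_mod_cast h y hy
    exact_mod_cast h3
  have hE2' : ∀ x c, (∀ᶠ y in 𝓝 x, c ≤ v₀ y) → c ≤ e x := by
    intro x c h
    obtain ⟨r, hr, hb⟩ := Metric.eventually_nhds_iff_ball.1 h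
    exact hE2 x c r hr hb
  have hev : ∀ x, e x ≤ v₀ x := by
    intro x
    by_contra! h
    obtain ⟨r, hr, hb⟩ := hE1 x _ h
    exact lt_irrefl _ (hb x (Metric.mem_ball_self hr))
  have helsc : LowerSemicontinuous e := by
    intro x c hc
    obtain ⟨c', h1, h2⟩ := exists_between hc
    obtain ⟨r, hr, hb⟩ := hE1 x c' h2
    filter_upwards [Metric.ball_mem_nhds x hr] with y hy
    refine h1.trans_le (hE2' y c' ?_)
    filter_upwards [Metric.isOpen_ball.mem_nhds hy] with z hz using (hb z hz).le
  have heW : ∀ x, -(B * W x) ≤ e x := by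
    intro x
    refine le_of_forall_lt fun c hc => ?_
    obtain ⟨c', h1, h2⟩ := exists_between hc
    refine h1.trans_le (hE2' x c' ?_)
    have hcont : Continuous fun y => -(B * W y) := by fun_prop
    filter_upwards [hcont.continuousAt.eventually (lt_mem_nhds h2)] with y hy
    exact hy.le.trans (neg_le_of_abs_le (hB y))
  have heabs : ∀ x, |e x| ≤ B * W x := fun x =>
    abs_le.2 ⟨heW x, (hev x).trans (le_of_abs_le (hB x))⟩
  have hemeas : Measurable e := helsc.measurable
  -- integrability
  have hWint : ∀ p ∈ K, Integrable W (Q p) := by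
    rintro ⟨x, a⟩ hp
    refine ⟨hWmeas.aestronglyMeasurable, ?_⟩
    rw [hasFiniteIntegral_iff_ofReal (ae_of_all _ fun y => zero_le_one.trans (hW1 y))]
    exact (hQW x a hp).trans_lt ENNReal.ofReal_lt_top
  have hdom : ∀ u : X → ℝ, Measurable u → (∀ x, |u x| ≤ B * W x) →
      ∀ p ∈ K, Integrable u (Q p) := fun u hu hub p hp =>
    ((hWint p hp).const_mul B).mono' hu.aestronglyMeasurable (ae_of_all _ hub)
  have heint := hdom e hemeas heabs
  have hvint := hdom v₀ hv₀meas hB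
  -- lower semicontinuity of the integral
  have hIlsc : LowerSemicontinuousOn (fun p => ∫ y, e y ∂(Q p)) K := by
    have hwlsc : LowerSemicontinuous fun y => e y + B * W y :=
      helsc.add (Continuous.lowerSemicontinuous (by fun_prop))
    have hw0 : ∀ y, 0 ≤ e y + B * W y := fun y => by linarith [heW y]
    have hL := lsc_lintegral Q K hQweak _ hwlsc hw0
    have hwint : ∀ p ∈ K, Integrable (fun y => e y + B * W y) (Q p) := fun p hp =>
      (heint p hp).add ((hWint p hp).const_mul B)
    have hw : LowerSemicontinuousOn (fun p => ∫ y, (e y + B * W y) ∂(Q p)) K := by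
      intro p hp c hc
      rcases lt_or_ge c 0 with h0 | h0
      · exact Eventually.of_forall fun q => h0.trans_le (integral_nonneg hw0)
      · have h1 : ENNReal.ofReal c < ∫⁻ y, ENNReal.ofReal (e y + B * W y) ∂(Q p) := by
          rw [← ofReal_integral_eq_lintegral_ofReal (hwint p hp) (ae_of_all _ hw0)]
          exact (ENNReal.ofReal_lt_ofReal_iff_of_nonneg h0).2 hc
        filter_upwards [hL p hp _ h1, self_mem_nhdsWithin] with q hq hqK
        rw [← ofReal_integral_eq_lintegral_ofReal (hwint q hqK) (ae_of_all _ hw0)] at hq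
        exact (ENNReal.ofReal_lt_ofReal_iff_of_nonneg h0).1 hq
    have hsum : LowerSemicontinuousOn
        (fun p => ∫ y, (e y + B * W y) ∂(Q p) + (-B) * ∫ y, W y ∂(Q p)) K :=
      hw.add (continuousOn_const.mul hQWcont).lowerSemicontinuousOn
    have hEq : ∀ p ∈ K, ∫ y, (e y + B * W y) ∂(Q p) + (-B) * ∫ y, W y ∂(Q p)
        = ∫ y, e y ∂(Q p) := by
      intro p hp
      rw [integral_add (heint p hp) ((hWint p hp).const_mul B), integral_const_mul]
      ring
    intro p hp c hc
    have hc' := hc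
    simp only [← hEq p hp] at hc'
    filter_upwards [hsum p hp c hc', self_mem_nhdsWithin] with q hq hqK
    rwa [← hEq q hqK]
  have hHlsc : LowerSemicontinuousOn (fun p => C p + α * ∫ y, e y ∂(Q p)) K := by
    refine hClsc.add ?_
    intro p hp c hc
    have h1 : c / α < ∫ y, e y ∂(Q p) := by rw [div_lt_iff₀ hα0]; linarith
    filter_upwards [hIlsc p hp _ h1] with q hq
    rw [gt_iff_lt, div_lt_iff₀ hα0] at hq
    linarith
  intro x
  by_contra! hlt
  obtain ⟨c, hc1, hc2⟩ := exists_between hlt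
  have hbdd : BddBelow ((fun a => C (x, a) + α * ∫ y, e y ∂(Q (x, a))) '' Adm x) := by
    obtain ⟨a₀, ha₀, hmin⟩ := LowerSemicontinuousOn.exists_isMinOn (hAne x) (hAcomp x)
      (f := fun a => C (x, a) + α * ∫ y, e y ∂(Q (x, a))) (by
        intro a ha c hc
        have h := hHlsc (x, a) ha c hc
        have ht : Tendsto (fun a : A => (x, a)) (𝓝[Adm x] a) (𝓝[K] (x, a)) :=
          tendsto_nhdsWithin_of_tendsto_nhds_of_eventually_within _
            (((Continuous.prodMk_right x).tendsto a).mono_left nhdsWithin_le_nhds)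
            (eventually_mem_nhdsWithin)
        exact ht.eventually h)
    exact ⟨_, by rintro _ ⟨a, ha, rfl⟩; exact hmin ha⟩
  have hnear : ∀ a ∈ Adm x, ∀ᶠ q in 𝓝 (a, x),
      (q.2, q.1) ∈ K → c < C (q.2, q.1) + α * ∫ y, e y ∂(Q (q.2, q.1)) := by
    intro a ha
    have h1 : c < C (x, a) + α * ∫ y, e y ∂(Q (x, a)) :=
      hc2.trans_le (csInf_le hbdd ⟨a, ha, rfl⟩)
    have h2 := eventually_nhdsWithin_iff.1 (hHlsc (x, a) ha c h1)
    exact (continuous_swap.tendsto (a, x)).eventually h2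
  have htube : {q : A × X | (q.2, q.1) ∈ K → c < C (q.2, q.1) + α * ∫ y, e y ∂(Q (q.2, q.1))}
      ∈ 𝓝ˢ (Adm x) ×ˢ 𝓝 x :=
    (hAcomp x).mem_nhdsSet_prod_of_forall fun a ha => by
      rw [← nhds_prod_eq]; exact hnear a ha
  obtain ⟨s, hs, t, ht, hst⟩ := mem_prod_iff.1 htube
  obtain ⟨U, hUo, hAU, hUs⟩ := mem_nhdsSet_iff_exists.1 hs
  refine absurd (hE2' x c ?_) (not_le.2 hc1)
  filter_upwards [hAusc x U hUo hAU, ht] with x' hx' hxt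
  have hmem : (x', g₀ x') ∈ K := hg₀sel x'
  have h1 : c < C (x', g₀ x') + α * ∫ y, e y ∂(Q (x', g₀ x')) :=
    @hst (g₀ x', x') ⟨hUs (hx' (hg₀sel x')), hxt⟩ hmem
  have h2 : ∫ y, e y ∂(Q (x', g₀ x')) ≤ ∫ y, v₀ y ∂(Q (x', g₀ x')) :=
    integral_mono (heint _ hmem) (hvint _ hmem) hev
  rw [hv₀fix x']
  nlinarith
end

section
/- Assume the growth conditions (GC) and the compactness-continuity conditions (CC). Let g₀ be a measurable selector, v₀ := V_{g₀}, and let g₁ be a measurable selector with T(v₀^e) = T_{g₁}(v₀^e), where v₀^e is the lower semicontinuous envelope of v₀. Then v₀^e ≥ T(v₀^e) ≥ V_{g₁} pointwise on X; in particular the improvement policy g₁ satisfies V_{g₁} ≤ v₀^e ≤ V_{g₀}. -/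
open MeasureTheory ProbabilityTheory Filter Topology
open scoped ENNReal

lemma aux_env_le {X : Type*} [MetricSpace X] {v : X → ℝ} {e : X → ℝ}
    (hE : ∀ x, (e x : EReal) = lscEnvE v x) (x : X) : e x ≤ v x := by
  rw [← EReal.coe_le_coe_iff, hE, lscEnvE]
  refine iSup₂_le fun r hr => ?_
  exact iInf₂_le x (Metric.mem_ball_self hr)

lemma aux_le_env {X : Type*} [MetricSpace X] {v : X → ℝ} {e : X → ℝ}
    (hE : ∀ x, (e x : EReal) = lscEnvE v x) (x : X) (t : ℝ)
    (h : ∀ᶠ y in 𝓝 x, t ≤ v y) : t ≤ e x := by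
  rw [← EReal.coe_le_coe_iff, hE, lscEnvE]
  obtain ⟨r, hr, hb⟩ := Metric.eventually_nhds_iff_ball.1 h
  refine le_trans ?_ (le_iSup₂ (f := fun (r : ℝ) (_ : r ∈ Set.Ioi (0 : ℝ)) =>
    ⨅ y ∈ Metric.ball x r, (v y : EReal)) r hr)
  exact le_iInf₂ fun y hy => EReal.coe_le_coe_iff.2 (hb y hy)

lemma aux_env_lsc {X : Type*} [MetricSpace X] {v : X → ℝ} {e : X → ℝ}
    (hE : ∀ x, (e x : EReal) = lscEnvE v x) : LowerSemicontinuous e := by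
  intro x t ht
  obtain ⟨s, hts, hs⟩ := exists_between ht
  have h1 : (s : EReal) < lscEnvE v x := by
    rw [← hE]; exact EReal.coe_lt_coe_iff.2 hs
  rw [lscEnvE] at h1
  simp only [lt_iSup_iff] at h1
  obtain ⟨r, hr, h1⟩ := h1
  have h2 : ∀ᶠ y in 𝓝 x, s ≤ v y := by
    refine Metric.eventually_nhds_iff_ball.2 ⟨r, hr, fun y hy => ?_⟩
    exact EReal.coe_le_coe_iff.1 (h1.le.trans (iInf₂_le y hy))
  filter_upwards [h2.eventually_nhds] with y hy
  exact hts.trans_le (aux_le_env hE y s hy)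

lemma aux_lintegral_liminf {X : Type*} [MetricSpace X] [MeasurableSpace X] [BorelSpace X]
    (μ : ProbabilityMeasure X) (μs : ℕ → ProbabilityMeasure X)
    (hμ : Tendsto μs atTop (𝓝 μ)) (f : X → ℝ) (hf : LowerSemicontinuous f) (h0 : 0 ≤ f) :
    ∫⁻ y, ENNReal.ofReal (f y) ∂(μ : Measure X) ≤
      atTop.liminf (fun i => ∫⁻ y, ENNReal.ofReal (f y) ∂(μs i : Measure X)) := by
  have hm := hf.measurable
  simp_rw [lintegral_eq_lintegral_meas_lt _ (Eventually.of_forall h0) hm.aemeasurable]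
  calc ∫⁻ (t : ℝ) in Set.Ioi 0, (μ : Measure X) {a | t < f a}
      ≤ ∫⁻ (t : ℝ) in Set.Ioi 0, atTop.liminf (fun i ↦ (μs i : Measure X) {a | t < f a}) :=
        lintegral_mono fun t =>
          ProbabilityMeasure.le_liminf_measure_open_of_tendsto hμ (hf.isOpen_preimage t)
    _ ≤ _ := lintegral_liminf_le (fun n ↦ Antitone.measurable (fun s t hst ↦
            measure_mono (fun ω hω ↦ lt_of_le_of_lt hst hω)))

lemma aux_integral_lsc {X P : Type*} [MetricSpace X] [MeasurableSpace X] [BorelSpace X]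
    [MetricSpace P] [MeasurableSpace P] (Q : Kernel P X) [IsMarkovKernel Q] (K : Set P)
    (hQweak : ∀ g : X → ℝ, Continuous g → (∃ b, ∀ y, |g y| ≤ b) →
      ContinuousOn (fun p : P => ∫ y, g y ∂(Q p)) K)
    (f : X → ℝ) (hf : LowerSemicontinuous f) (h0 : 0 ≤ f)
    (hint : ∀ p ∈ K, Integrable f (Q p)) :
    LowerSemicontinuousOn (fun p => ∫ y, f y ∂(Q p)) K := by
  intro p hp t ht
  by_contra hcon
  have hfr : ∃ᶠ q in 𝓝[K] p, ¬ t < ∫ y, f y ∂(Q q) := not_eventually.1 hcon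
  have hfr2 := hfr.and_eventually self_mem_nhdsWithin
  obtain ⟨u, hu, hu2⟩ := exists_seq_forall_of_frequently hfr2
  let μs : ℕ → ProbabilityMeasure X := fun n => ⟨Q (u n), inferInstance⟩
  let μ : ProbabilityMeasure X := ⟨Q p, inferInstance⟩
  have hμ : Tendsto μs atTop (𝓝 μ) := by
    rw [ProbabilityMeasure.tendsto_iff_forall_integral_tendsto]
    intro g
    exact ((hQweak g g.continuous ⟨‖g‖, fun y => g.norm_coe_le_norm y⟩) p hp).tendsto.comp hu
  have h := aux_lintegral_liminf μ μs hμ f hf h0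
  have h1 : ENNReal.ofReal (∫ y, f y ∂(Q p)) ≤ ENNReal.ofReal t := by
    rw [ofReal_integral_eq_lintegral_ofReal (hint p hp) (Eventually.of_forall h0)]
    refine h.trans ?_
    refine liminf_le_of_le (by isBoundedDefault) fun b hb => ?_
    obtain ⟨n, hn⟩ := hb.exists
    refine hn.trans ?_
    change ∫⁻ y, ENNReal.ofReal (f y) ∂(Q (u n)) ≤ _
    rw [← ofReal_integral_eq_lintegral_ofReal (hint _ (hu2 n).2) (Eventually.of_forall h0)]
    exact ENNReal.ofReal_le_ofReal (not_lt.1 (hu2 n).1)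
  have ht0 : 0 ≤ t := by
    have := (hu2 0).1
    exact (integral_nonneg h0).trans (not_lt.1 this)
  exact absurd ((ENNReal.ofReal_le_ofReal_iff ht0).1 h1) (not_le.2 ht)

lemma aux_wnorm {X : Type*} {W u : X → ℝ} (hW1 : ∀ x, 1 ≤ W x) (h : WNorm W u < ⊤) :
    ∃ m : ℝ, 0 ≤ m ∧ ∀ x, |u x| ≤ m * W x := by
  refine ⟨(WNorm W u).toReal, ENNReal.toReal_nonneg, fun x => ?_⟩
  have hpos : 0 < W x := by linarith [hW1 x]
  rw [← div_le_iff₀ hpos, ← ENNReal.ofReal_le_iff_le_toReal h.ne]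
  exact le_iSup (fun x => ENNReal.ofReal (|u x| / W x)) x

/-- Under (GC) and (CC), if `g₁` improves on `g₀` through the lower
semicontinuous envelope `v₀ᵉ` of `v₀ = V_{g₀}`, i.e. `T(v₀ᵉ) = T_{g₁}(v₀ᵉ)`,
then `v₀ᵉ ≥ T(v₀ᵉ) ≥ V_{g₁}` pointwise; in particular
`V_{g₁} ≤ v₀ᵉ ≤ V_{g₀}` (Lemma 1(a)-(c) of the paper). -/
theorem policy_improvement {X A : Type*}
    [MetricSpace X] [PolishSpace X] [MeasurableSpace X] [BorelSpace X]
    [MetricSpace A] [PolishSpace A] [MeasurableSpace A] [BorelSpace A]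
    (Adm : X → Set A) (hAne : ∀ x, (Adm x).Nonempty)
    (hKmeas : MeasurableSet {p : X × A | p.2 ∈ Adm p.1})
    (Q : Kernel (X × A) X) [IsMarkovKernel Q]
    (C : X × A → ℝ) (hCmeas : Measurable C)
    (α : ℝ) (hα0 : 0 < α) (hα1 : α < 1)
    (M β : ℝ) (hM : 0 < M) (hβ : 1 < β)
    (W : X → ℝ) (hWmeas : Measurable W) (hW1 : ∀ x, 1 ≤ W x)
    (hCW : ∀ x, ∀ a ∈ Adm x, |C (x, a)| ≤ M * W x)
    (hQW : ∀ x, ∀ a ∈ Adm x,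
      ∫⁻ y, ENNReal.ofReal (W y) ∂(Q (x, a)) ≤ ENNReal.ofReal (β * W x))
    (hγ : α * β < 1)
    (hAcomp : ∀ x, IsCompact (Adm x))
    (hAusc : ∀ x, ∀ U : Set A, IsOpen U → Adm x ⊆ U → ∀ᶠ x' in 𝓝 x, Adm x' ⊆ U)
    (hClsc : LowerSemicontinuousOn C {p : X × A | p.2 ∈ Adm p.1})
    (hQweak : ∀ g : X → ℝ, Continuous g → (∃ b, ∀ y, |g y| ≤ b) →
      ContinuousOn (fun p : X × A => ∫ y, g y ∂(Q p)) {p : X × A | p.2 ∈ Adm p.1})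
    (hWcont : Continuous W)
    (hQWcont : ContinuousOn (fun p : X × A => ∫ y, W y ∂(Q p))
      {p : X × A | p.2 ∈ Adm p.1})
    (g₀ : X → A) (hg₀ : Measurable g₀) (hg₀sel : ∀ x, g₀ x ∈ Adm x)
    (v₀ : X → ℝ) (hv₀meas : Measurable v₀) (hv₀W : WNorm W v₀ < ⊤)
    (hv₀fix : ∀ x, v₀ x = C (x, g₀ x) + α * ∫ y, v₀ y ∂(Q (x, g₀ x)))
    (e : X → ℝ) (hE : ∀ x, (e x : EReal) = lscEnvE v₀ x)
    (g₁ : X → A) (hg₁ : Measurable g₁) (hg₁sel : ∀ x, g₁ x ∈ Adm x)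
    (hg₁imp : ∀ x, Tbell Adm Q C α e x = C (x, g₁ x) + α * ∫ y, e y ∂(Q (x, g₁ x)))
    (v₁ : X → ℝ) (hv₁meas : Measurable v₁) (hv₁W : WNorm W v₁ < ⊤)
    (hv₁fix : ∀ x, v₁ x = C (x, g₁ x) + α * ∫ y, v₁ y ∂(Q (x, g₁ x))) :
    ∀ x, v₁ x ≤ Tbell Adm Q C α e x ∧ Tbell Adm Q C α e x ≤ e x ∧ e x ≤ v₀ x := by
  have hWpos : ∀ x, 0 < W x := fun x => by linarith [hW1 x]
  have hWint : ∀ x, ∀ a ∈ Adm x, Integrable W (Q (x, a)) := by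
    intro x a ha
    refine ⟨hWmeas.aestronglyMeasurable, ?_⟩
    rw [hasFiniteIntegral_iff_ofReal (Eventually.of_forall fun y => (hWpos y).le)]
    exact (hQW x a ha).trans_lt ENNReal.ofReal_lt_top
  have hWle : ∀ x, ∀ a ∈ Adm x, ∫ y, W y ∂(Q (x, a)) ≤ β * W x := by
    intro x a ha
    have h := hQW x a ha
    rw [← ofReal_integral_eq_lintegral_ofReal (hWint x a ha)
      (Eventually.of_forall fun y => (hWpos y).le)] at h
    exact (ENNReal.ofReal_le_ofReal_iff (by have := hWpos x; positivity)).1 h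
  obtain ⟨m, hm0, hm⟩ := aux_wnorm hW1 hv₀W
  obtain ⟨m₁, hm₁0, hm₁⟩ := aux_wnorm hW1 hv₁W
  have hint : ∀ (u : X → ℝ) (c : ℝ), Measurable u → (∀ y, |u y| ≤ c * W y) →
      ∀ x, ∀ a ∈ Adm x, Integrable u (Q (x, a)) := by
    intro u c hu hc x a ha
    exact ((hWint x a ha).const_mul c).mono' hu.aestronglyMeasurable (Eventually.of_forall hc)
  have hev : ∀ x, e x ≤ v₀ x := aux_env_le hE
  have helsc : LowerSemicontinuous e := aux_env_lsc hE
  have hemeas : Measurable e := helsc.measurable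
  have helow : ∀ x, -(m * W x) ≤ e x := by
    intro x
    refine le_of_forall_lt fun t ht => ?_
    obtain ⟨s, hts, hs⟩ := exists_between ht
    refine hts.trans_le (aux_le_env hE x s ?_)
    have hc : Continuous fun y => -(m * W y) := by fun_prop
    filter_upwards [hc.continuousAt.eventually_const_lt hs] with y hy
    linarith [(abs_le.1 (hm y)).1]
  have heW : ∀ x, |e x| ≤ m * W x := fun x =>
    abs_le.2 ⟨helow x, (hev x).trans (abs_le.1 (hm x)).2⟩
  have heint := hint e m hemeas heW
  have hv₀int := hint v₀ m hv₀meas hm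
  have hv₁int := hint v₁ m₁ hv₁meas hm₁
  -- the objective
  set F : X × A → ℝ := fun p => C p + α * ∫ y, e y ∂(Q p) with hF
  have hFlsc : LowerSemicontinuousOn F {p : X × A | p.2 ∈ Adm p.1} := by
    have h1 : LowerSemicontinuousOn (fun p : X × A => ∫ y, (e y + m * W y) ∂(Q p))
        {p : X × A | p.2 ∈ Adm p.1} := by
      refine aux_integral_lsc Q _ hQweak _ ?_ ?_ ?_
      · exact helsc.add (Continuous.lowerSemicontinuous (by fun_prop))
      · intro y
        have := helow y
        simp only [Pi.zero_apply]
        linarith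
      · rintro ⟨x, a⟩ ha
        exact (heint x a ha).add ((hWint x a ha).const_mul m)
    have h2 : LowerSemicontinuousOn (fun p : X × A => α * ∫ y, (e y + m * W y) ∂(Q p))
        {p : X × A | p.2 ∈ Adm p.1} := by
      intro p hp t ht
      have ht' : t / α < ∫ y, (e y + m * W y) ∂(Q p) := by
        rw [div_lt_iff₀ hα0]; simpa [mul_comm] using ht
      filter_upwards [h1 p hp _ ht'] with q hq
      rw [gt_iff_lt, div_lt_iff₀ hα0] at hq
      simpa [mul_comm] using hq
    have h3 : LowerSemicontinuousOn (fun p : X × A => -(α * (m * ∫ y, W y ∂(Q p))))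
        {p : X × A | p.2 ∈ Adm p.1} :=
      ContinuousOn.lowerSemicontinuousOn (by fun_prop)
    have h4 := (hClsc.add h2).add h3
    intro p hp
    refine (h4 p hp).congr_of_eventuallyEq hp ?_
    filter_upwards [self_mem_nhdsWithin] with q hq
    obtain ⟨x, a⟩ := q
    intro t
    have := integral_add (heint x a hq) ((hWint x a hq).const_mul m)
    rw [integral_const_mul] at this
    have h5 : C (x, a) + α * ∫ y, (e y + m * W y) ∂(Q (x, a)) +
        -(α * (m * ∫ y, W y ∂(Q (x, a)))) = F (x, a) := by
      simp only [hF, this]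
      ring
    simp only [h5]
  have hTle : ∀ x, ∀ a ∈ Adm x, Tbell Adm Q C α e x ≤ F (x, a) := by
    intro x a ha
    refine csInf_le ?_ ⟨a, ha, rfl⟩
    refine ⟨-(M * W x) + α * (-(m * (β * W x))), ?_⟩
    rintro _ ⟨b, hb, rfl⟩
    have h1 := (abs_le.1 (hCW x b hb)).1
    have h2 : -(m * (β * W x)) ≤ ∫ y, e y ∂(Q (x, b)) := by
      have h3 : ∫ y, -(m * W y) ∂(Q (x, b)) ≤ ∫ y, e y ∂(Q (x, b)) :=
        integral_mono ((hWint x b hb).const_mul m).neg (heint x b hb) helow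
      rw [integral_neg, integral_const_mul] at h3
      have := mul_le_mul_of_nonneg_left (hWle x b hb) hm0
      linarith
    have := mul_le_mul_of_nonneg_left h2 hα0.le
    simp only
    linarith
  have hTe : ∀ x, Tbell Adm Q C α e x ≤ e x := by
    intro x
    refine le_of_forall_lt fun t ht => ?_
    obtain ⟨s, hts, hs⟩ := exists_between ht
    refine hts.trans_le (aux_le_env hE x s ?_)
    have key : ∀ᶠ x' in 𝓝 x, ∀ a ∈ Adm x', s < F (x', a) := by
      have hloc : ∀ a ∈ Adm x, ∃ U : Set X, ∃ V : Set A, U ∈ 𝓝 x ∧ IsOpen V ∧ a ∈ V ∧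
          ∀ x' ∈ U, ∀ a' ∈ V, a' ∈ Adm x' → s < F (x', a') := by
        intro a ha
        have h := hFlsc (x, a) ha s (hs.trans_le (hTle x a ha))
        rw [eventually_nhdsWithin_iff, nhds_prod_eq] at h
        obtain ⟨U, hU, V, hV, hUV⟩ := mem_prod_iff.1 h
        obtain ⟨V', hV'V, hV'o, haV'⟩ := mem_nhds_iff.1 hV
        exact ⟨U, V', hU, hV'o, haV', fun x' hx' a' ha' hadm =>
          hUV (Set.mk_mem_prod hx' (hV'V ha')) hadm⟩
      choose! U V hU hV haV hUV using hloc
      obtain ⟨S, hSsub, hS⟩ := (hAcomp x).elim_nhds_subcover V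
        fun a ha => (hV a ha).mem_nhds (haV a ha)
      have e1 : ∀ᶠ x' in 𝓝 x, Adm x' ⊆ ⋃ a ∈ S, V a :=
        hAusc x _ (isOpen_biUnion fun a ha => hV a (hSsub a ha)) hS
      have e2 : ∀ᶠ x' in 𝓝 x, ∀ a ∈ S, x' ∈ U a :=
        (Filter.eventually_all_finset S).2 fun a ha => hU a (hSsub a ha)
      filter_upwards [e1, e2] with x' h1 h2 b hb
      obtain ⟨a, haS, hbV⟩ := Set.mem_iUnion₂.1 (h1 hb)
      exact hUV a (hSsub a haS) x' (h2 a haS) b hbV hb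
    filter_upwards [key] with x' hx'
    have h1 := hx' (g₀ x') (hg₀sel x')
    have h2 : ∫ y, e y ∂(Q (x', g₀ x')) ≤ ∫ y, v₀ y ∂(Q (x', g₀ x')) :=
      integral_mono (heint _ _ (hg₀sel x')) (hv₀int _ _ (hg₀sel x')) hev
    have := mul_le_mul_of_nonneg_left h2 hα0.le
    rw [hv₀fix x']
    simp only [hF] at h1
    linarith
  have hγ0 : 0 ≤ α * β := by positivity
  have hstep : ∀ n : ℕ, ∀ x, v₁ x - e x ≤ (α * β) ^ n * ((m + m₁) * W x) := by
    intro n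
    induction n with
    | zero =>
      intro x
      have h1 := (abs_le.1 (hm₁ x)).2
      have h2 := helow x
      simp only [pow_zero, one_mul]
      linarith
    | succ n ih =>
      intro x
      have ha := hg₁sel x
      have h1 : ∫ y, (v₁ y - e y) ∂(Q (x, g₁ x)) ≤
          ∫ y, (α * β) ^ n * ((m + m₁) * W y) ∂(Q (x, g₁ x)) :=
        integral_mono ((hv₁int _ _ ha).sub (heint _ _ ha))
          (((hWint _ _ ha).const_mul _).const_mul _) ih
      rw [integral_sub (hv₁int _ _ ha) (heint _ _ ha), integral_const_mul,
        integral_const_mul] at h1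
      have h2 : (α * β) ^ n * ((m + m₁) * ∫ y, W y ∂(Q (x, g₁ x))) ≤
          (α * β) ^ n * ((m + m₁) * (β * W x)) := by
        have := hWle _ _ ha
        gcongr
      have h3 := mul_le_mul_of_nonneg_left (h1.trans h2) hα0.le
      have h4 := hTe x
      rw [hg₁imp x] at h4
      have h5 := hv₁fix x
      have h6 : (α * β) ^ (n + 1) * ((m + m₁) * W x) =
        α * ((α * β) ^ n * ((m + m₁) * (β * W x))) := by ring
      rw [h6]
      linarith
  have hv₁e : ∀ x, v₁ x ≤ e x := by
    intro x
    have hlim : Tendsto (fun n : ℕ => (α * β) ^ n * ((m + m₁) * W x)) atTop (𝓝 0) := by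
      simpa using (tendsto_pow_atTop_nhds_zero_of_lt_one hγ0 hγ).mul_const ((m + m₁) * W x)
    have := ge_of_tendsto' hlim fun n => hstep n x
    linarith
  intro x
  refine ⟨?_, hTe x, hev x⟩
  rw [hg₁imp x, hv₁fix x]
  have h2 : ∫ y, v₁ y ∂(Q (x, g₁ x)) ≤ ∫ y, e y ∂(Q (x, g₁ x)) :=
    integral_mono (hv₁int _ _ (hg₁sel x)) (heint _ _ (hg₁sel x)) hv₁e
  have := mul_le_mul_of_nonneg_left h2 hα0.le
  linarith
end

section
/- Assume the growth conditions (GC) and the compactness-continuity conditions (CC). Let f₀ be a measurable selector and define the policy iteration sequences by v_n := V_{f_n} and f_{n+1} a measurable selector with T(v_n^e) = T_{f_{n+1}}(v_n^e), where v_n^e is the lower semicontinuous envelope of v_n. Then for every n ≥ 0 the chain of pointwise inequalities v_n ≥ v_n^e ≥ T(v_n^e) ≥ v_{n+1} ≥ v_{n+1}^e holds on X. -/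
open MeasureTheory ProbabilityTheory Filter Topology
open scoped ENNReal

section PIHelpers

lemma pi_wnorm {X : Type*} {W u : X → ℝ} (hW1 : ∀ x, 1 ≤ W x) (h : WNorm W u < ⊤) :
    ∃ N : ℝ, 0 ≤ N ∧ ∀ x, |u x| ≤ N * W x := by
  refine ⟨(WNorm W u).toReal, ENNReal.toReal_nonneg, fun x => ?_⟩
  have hW : 0 < W x := lt_of_lt_of_le one_pos (hW1 x)
  rw [← div_le_iff₀ hW]
  have h1 : ENNReal.ofReal (|u x| / W x) ≤ WNorm W u :=
    le_iSup (fun x => ENNReal.ofReal (|u x| / W x)) x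
  exact (ENNReal.ofReal_le_iff_le_toReal h.ne).1 h1

lemma pi_env_le {X : Type*} [MetricSpace X] {u e : X → ℝ}
    (hE : ∀ x, (e x : EReal) = lscEnvE u x) (x : X) : e x ≤ u x := by
  rw [← EReal.coe_le_coe_iff, hE x]
  refine iSup₂_le fun r hr => ?_
  exact iInf₂_le x (Metric.mem_ball_self hr)

lemma pi_env_ge {X : Type*} [MetricSpace X] {u e : X → ℝ}
    (hE : ∀ x, (e x : EReal) = lscEnvE u x) (x : X) (c : ℝ)
    (h : ∀ᶠ y in 𝓝 x, c ≤ u y) : c ≤ e x := by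
  rw [← EReal.coe_le_coe_iff, hE x]
  obtain ⟨r, hr, hb⟩ := Metric.eventually_nhds_iff_ball.1 h
  refine le_trans ?_ (le_iSup₂ (f := fun (r : ℝ) (_ : r ∈ Set.Ioi (0:ℝ)) =>
    ⨅ y ∈ Metric.ball x r, (u y : EReal)) r hr)
  exact le_iInf₂ fun y hy => EReal.coe_le_coe_iff.2 (hb y hy)

lemma pi_env_lsc {X : Type*} [MetricSpace X] {u e : X → ℝ}
    (hE : ∀ x, (e x : EReal) = lscEnvE u x) : LowerSemicontinuous e := by
  intro x c hc
  obtain ⟨d, hcd, hd⟩ := exists_between hc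
  have h1 : (d : EReal) < lscEnvE u x := by rw [← hE x]; exact EReal.coe_lt_coe_iff.2 hd
  obtain ⟨r, hr⟩ := lt_iSup_iff.1 h1
  obtain ⟨hr0, hr⟩ := lt_iSup_iff.1 hr
  have h2 : ∀ᶠ y in 𝓝 x, d ≤ u y := by
    filter_upwards [Metric.ball_mem_nhds x hr0] with y hy
    exact EReal.coe_le_coe_iff.1 (hr.le.trans (iInf₂_le y hy))
  filter_upwards [eventually_eventually_nhds.2 h2] with y hy
  exact hcd.trans_le (pi_env_ge hE y d hy)

/-- Fatou lemma for weakly convergent measures and a nonnegative lsc function. -/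
lemma pi_fatou {X P : Type*} [MetricSpace X] [MeasurableSpace X] [BorelSpace X]
    {L : Filter P} [L.IsCountablyGenerated] (μs : P → ProbabilityMeasure X)
    (μ : ProbabilityMeasure X) (h : Tendsto μs L (𝓝 μ))
    (g : X → ℝ) (hg0 : ∀ x, 0 ≤ g x) (hg : LowerSemicontinuous g) :
    ∫⁻ y, ENNReal.ofReal (g y) ∂(μ : Measure X) ≤
      liminf (fun p => ∫⁻ y, ENNReal.ofReal (g y) ∂(μs p : Measure X)) L := by
  have hl : ∀ ν : Measure X, ∫⁻ y, ENNReal.ofReal (g y) ∂ν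
      = ∫⁻ t in Set.Ioi (0:ℝ), ν {a | t < g a} := fun ν =>
    lintegral_eq_lintegral_meas_lt ν (Eventually.of_forall hg0) hg.measurable.aemeasurable
  simp only [hl]
  refine le_trans ?_ (lintegral_liminf_le ?_)
  · refine lintegral_mono fun t => ?_
    exact ProbabilityMeasure.le_liminf_measure_open_of_tendsto h (hg.isOpen_preimage t)
  · intro p
    refine Antitone.measurable ?_
    intro s t hst
    exact measure_mono fun a (ha : t < g a) => lt_of_le_of_lt hst ha

lemma pi_int_lsc {X P : Type*} [MetricSpace X] [MeasurableSpace X] [BorelSpace X]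
    [TopologicalSpace P] [FirstCountableTopology P] [MeasurableSpace P]
    (Q : Kernel P X) [IsMarkovKernel Q] (K : Set P)
    (hQweak : ∀ g : X → ℝ, Continuous g → (∃ b, ∀ y, |g y| ≤ b) →
      ContinuousOn (fun p : P => ∫ y, g y ∂(Q p)) K)
    (g : X → ℝ) (hg0 : ∀ x, 0 ≤ g x) (hg : LowerSemicontinuous g)
    (hint : ∀ p ∈ K, Integrable g (Q p)) :
    LowerSemicontinuousOn (fun p => ∫ y, g y ∂(Q p)) K := by
  intro p hp c hc
  rcases lt_or_ge c 0 with hc0 | hc0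
  · exact Eventually.of_forall fun q => hc0.trans_le (integral_nonneg hg0)
  let μs : P → ProbabilityMeasure X := fun q => ⟨Q q, inferInstance⟩
  have ht : Tendsto μs (𝓝[K] p) (𝓝 (μs p)) := by
    rw [ProbabilityMeasure.tendsto_iff_forall_integral_tendsto]
    intro φ
    exact hQweak φ φ.continuous ⟨‖φ‖, fun y => φ.norm_coe_le_norm y⟩ p hp
  have hF := pi_fatou μs (μs p) ht g hg0 hg
  have hof : ∀ q ∈ K, ENNReal.ofReal (∫ y, g y ∂(Q q)) = ∫⁻ y, ENNReal.ofReal (g y) ∂(Q q) :=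
    fun q hq => ofReal_integral_eq_lintegral_ofReal (hint q hq) (Eventually.of_forall hg0)
  have h1 : ENNReal.ofReal c < ∫⁻ y, ENNReal.ofReal (g y) ∂(Q p) := by
    rw [← hof p hp]
    exact (ENNReal.ofReal_lt_ofReal_iff_of_nonneg hc0).2 hc
  have h2 := eventually_lt_of_lt_liminf (h1.trans_le hF)
  filter_upwards [h2, self_mem_nhdsWithin] with q hq hqK
  have h3 : ENNReal.ofReal c < ∫⁻ y, ENNReal.ofReal (g y) ∂(Q q) := hq
  rw [← hof q hqK] at h3
  exact (ENNReal.ofReal_lt_ofReal_iff_of_nonneg hc0).1 h3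

/-- Tube argument. -/
lemma pi_tube {X A : Type*} [TopologicalSpace X] [TopologicalSpace A]
    (Adm : X → Set A) (hAcomp : ∀ x, IsCompact (Adm x))
    (hAusc : ∀ x, ∀ U : Set A, IsOpen U → Adm x ⊆ U → ∀ᶠ x' in 𝓝 x, Adm x' ⊆ U)
    (h : X × A → ℝ) (hlsc : LowerSemicontinuousOn h {p : X × A | p.2 ∈ Adm p.1})
    (x : X) (c : ℝ) (hc : ∀ a ∈ Adm x, c < h (x, a)) :
    ∀ᶠ x' in 𝓝 x, ∀ a ∈ Adm x', c < h (x', a) := by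
  have h1 : ∀ a ∈ Adm x, ∀ᶠ p : A × X in 𝓝 a ×ˢ 𝓝 x, p.1 ∈ Adm p.2 → c < h (p.2, p.1) := by
    intro a ha
    have h2 := eventually_nhdsWithin_iff.1 (hlsc (x, a) ha c (hc a ha))
    rw [nhds_prod_eq] at h2
    exact (Filter.tendsto_prod_swap (f := 𝓝 a) (g := 𝓝 x)).eventually h2
  have h3 : ∀ᶠ p : A × X in 𝓝ˢ (Adm x) ×ˢ 𝓝 x, p.1 ∈ Adm p.2 → c < h (p.2, p.1) :=
    (hAcomp x).mem_nhdsSet_prod_of_forall h1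
  obtain ⟨pa, hpa, pb, hpb, hab⟩ := eventually_prod_iff.1 h3
  obtain ⟨U, hU, hAU, hUs⟩ := mem_nhdsSet_iff_exists.1 hpa
  filter_upwards [hpb, hAusc x U hU hAU] with x' hx' hs a ha
  exact hab (hUs (hs ha)) hx' ha

end PIHelpers

/-- Monotonicity of the policy iteration algorithm with smoothing: under (GC)
and (CC), for the policy iteration sequences `v_n = V_{f_n}`, with `f_{n+1}` an
improvement selector for the envelope `v_nᵉ`, the chain
`v_n ≥ v_nᵉ ≥ T(v_nᵉ) ≥ v_{n+1} ≥ v_{n+1}ᵉ` holds pointwise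
(Theorem 2(a) of the paper). -/
theorem policy_iteration_monotone {X A : Type*}
    [MetricSpace X] [PolishSpace X] [MeasurableSpace X] [BorelSpace X]
    [MetricSpace A] [PolishSpace A] [MeasurableSpace A] [BorelSpace A]
    (Adm : X → Set A) (hAne : ∀ x, (Adm x).Nonempty)
    (hKmeas : MeasurableSet {p : X × A | p.2 ∈ Adm p.1})
    (Q : Kernel (X × A) X) [IsMarkovKernel Q]
    (C : X × A → ℝ) (hCmeas : Measurable C)
    (α : ℝ) (hα0 : 0 < α) (hα1 : α < 1)
    (M β : ℝ) (hM : 0 < M) (hβ : 1 < β)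
    (W : X → ℝ) (hWmeas : Measurable W) (hW1 : ∀ x, 1 ≤ W x)
    (hCW : ∀ x, ∀ a ∈ Adm x, |C (x, a)| ≤ M * W x)
    (hQW : ∀ x, ∀ a ∈ Adm x,
      ∫⁻ y, ENNReal.ofReal (W y) ∂(Q (x, a)) ≤ ENNReal.ofReal (β * W x))
    (hγ : α * β < 1)
    (hAcomp : ∀ x, IsCompact (Adm x))
    (hAusc : ∀ x, ∀ U : Set A, IsOpen U → Adm x ⊆ U → ∀ᶠ x' in 𝓝 x, Adm x' ⊆ U)
    (hClsc : LowerSemicontinuousOn C {p : X × A | p.2 ∈ Adm p.1})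
    (hQweak : ∀ g : X → ℝ, Continuous g → (∃ b, ∀ y, |g y| ≤ b) →
      ContinuousOn (fun p : X × A => ∫ y, g y ∂(Q p)) {p : X × A | p.2 ∈ Adm p.1})
    (hWcont : Continuous W)
    (hQWcont : ContinuousOn (fun p : X × A => ∫ y, W y ∂(Q p))
      {p : X × A | p.2 ∈ Adm p.1})
    (f : ℕ → X → A) (hfmeas : ∀ n, Measurable (f n))
    (hfsel : ∀ n x, f n x ∈ Adm x)
    (v : ℕ → X → ℝ) (hvmeas : ∀ n, Measurable (v n))
    (hvW : ∀ n, WNorm W (v n) < ⊤)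
    (hvfix : ∀ n x, v n x = C (x, f n x) + α * ∫ y, v n y ∂(Q (x, f n x)))
    (e : ℕ → X → ℝ) (hE : ∀ n x, (e n x : EReal) = lscEnvE (v n) x)
    (himp : ∀ n x, Tbell Adm Q C α (e n) x =
      C (x, f (n + 1) x) + α * ∫ y, e n y ∂(Q (x, f (n + 1) x)))
    : ∀ n x, e n x ≤ v n x ∧ Tbell Adm Q C α (e n) x ≤ e n x ∧
        v (n + 1) x ≤ Tbell Adm Q C α (e n) x ∧ e (n + 1) x ≤ v (n + 1) x := by
  have hWpos : ∀ x, 0 < W x := fun x => lt_of_lt_of_le one_pos (hW1 x)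
  have hWint : ∀ x, ∀ a ∈ Adm x, Integrable W (Q (x, a)) := by
    intro x a ha
    refine ⟨hWmeas.aestronglyMeasurable, ?_⟩
    rw [hasFiniteIntegral_iff_ofReal (Eventually.of_forall fun y => (hWpos y).le)]
    exact (hQW x a ha).trans_lt ENNReal.ofReal_lt_top
  have hWle : ∀ x, ∀ a ∈ Adm x, ∫ y, W y ∂(Q (x, a)) ≤ β * W x := by
    intro x a ha
    have h := hQW x a ha
    rw [← ofReal_integral_eq_lintegral_ofReal (hWint x a ha)
      (Eventually.of_forall fun y => (hWpos y).le)] at h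
    exact (ENNReal.ofReal_le_ofReal_iff (mul_nonneg (by linarith) (hWpos x).le)).1 h
  have hint : ∀ u : X → ℝ, Measurable u → ∀ N : ℝ, (∀ x, |u x| ≤ N * W x) →
      ∀ x, ∀ a ∈ Adm x, Integrable u (Q (x, a)) := by
    intro u hu N hN x a ha
    exact ((hWint x a ha).const_mul N).mono' hu.aestronglyMeasurable
      (Eventually.of_forall hN)
  choose N hN0 hN using fun n => pi_wnorm hW1 (hvW n)
  have hev : ∀ n x, e n x ≤ v n x := fun n x => pi_env_le (hE n) x
  have helsc : ∀ n, LowerSemicontinuous (e n) := fun n => pi_env_lsc (hE n)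
  have hemeas : ∀ n, Measurable (e n) := fun n => (helsc n).measurable
  have helow : ∀ n x, -(N n * W x) ≤ e n x := by
    intro n x
    refine le_of_forall_lt fun c hc => ?_
    obtain ⟨d, hcd, hd⟩ := exists_between hc
    refine hcd.trans_le (pi_env_ge (hE n) x d ?_)
    have hcont : Continuous fun y => -(N n * W y) := by fun_prop
    filter_upwards [hcont.continuousAt.eventually (lt_mem_nhds hd)] with y hy
    exact hy.le.trans (abs_le.1 (hN n y)).1
  have heN : ∀ n x, |e n x| ≤ N n * W x := fun n x =>
    abs_le.2 ⟨helow n x, (hev n x).trans (abs_le.1 (hN n x)).2⟩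
  have heint := fun n => hint (e n) (hemeas n) (N n) (heN n)
  have hvint := fun n => hint (v n) (hvmeas n) (N n) (hN n)
  have hTle : ∀ n x, ∀ a ∈ Adm x,
      Tbell Adm Q C α (e n) x ≤ C (x, a) + α * ∫ y, e n y ∂(Q (x, a)) := by
    intro n x a ha
    refine csInf_le ⟨-(M * W x) + α * -(N n * (β * W x)), ?_⟩ ⟨a, ha, rfl⟩
    rintro _ ⟨b, hb, rfl⟩
    have h1 := (abs_le.1 (hCW x b hb)).1
    have h2 : ∫ y, -(N n * W y) ∂(Q (x, b)) ≤ ∫ y, e n y ∂(Q (x, b)) :=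
      integral_mono ((hWint x b hb).const_mul (N n)).neg (heint n x b hb) (helow n)
    rw [integral_neg, integral_const_mul] at h2
    have h3 := mul_le_mul_of_nonneg_left (hWle x b hb) (hN0 n)
    have h4 : -(N n * (β * W x)) ≤ ∫ y, e n y ∂(Q (x, b)) := by linarith
    have h5 := mul_le_mul_of_nonneg_left h4 hα0.le
    show _ ≤ C (x, b) + α * ∫ y, e n y ∂(Q (x, b))
    linarith
  have hTv : ∀ n x, Tbell Adm Q C α (e n) x ≤ v n x := by
    intro n x
    refine (hTle n x _ (hfsel n x)).trans ?_
    rw [hvfix n x]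
    have := integral_mono (heint n x _ (hfsel n x)) (hvint n x _ (hfsel n x)) (hev n)
    have := mul_le_mul_of_nonneg_left this hα0.le
    linarith
  have hlsc : ∀ n, LowerSemicontinuousOn
      (fun p : X × A => C p + α * ∫ y, e n y ∂(Q p)) {p : X × A | p.2 ∈ Adm p.1} := by
    intro n
    have hg : LowerSemicontinuous fun y => e n y + N n * W y :=
      (helsc n).add (Continuous.lowerSemicontinuous (by fun_prop))
    have h1 := pi_int_lsc Q {p : X × A | p.2 ∈ Adm p.1} hQweak _
      (fun y => by linarith [helow n y]) hg
      (fun p hp => (heint n p.1 p.2 hp).add ((hWint p.1 p.2 hp).const_mul (N n)))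
    have h2 : LowerSemicontinuousOn (fun p : X × A => α * ∫ y, e n y + N n * W y ∂(Q p))
        {p : X × A | p.2 ∈ Adm p.1} := by
      intro p hp c hc
      have hc' : c / α < ∫ y, e n y + N n * W y ∂(Q p) := by
        rw [div_lt_iff₀ hα0, mul_comm]; exact hc
      filter_upwards [h1 p hp _ hc'] with q hq
      rw [gt_iff_lt, div_lt_iff₀ hα0, mul_comm] at hq; exact hq
    have h3 : LowerSemicontinuousOn (fun p : X × A => -(α * (N n * ∫ y, W y ∂(Q p))))
        {p : X × A | p.2 ∈ Adm p.1} :=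
      ContinuousOn.lowerSemicontinuousOn
        ((continuousOn_const.mul (continuousOn_const.mul hQWcont)).neg)
    have h4 := (hClsc.add h2).add h3
    have heq : ∀ p ∈ {p : X × A | p.2 ∈ Adm p.1},
        C p + α * (∫ y, e n y + N n * W y ∂(Q p)) + -(α * (N n * ∫ y, W y ∂(Q p)))
        = C p + α * ∫ y, e n y ∂(Q p) := by
      intro p hp
      rw [integral_add (heint n p.1 p.2 hp) ((hWint p.1 p.2 hp).const_mul (N n)),
        integral_const_mul]
      ring
    intro p hp c hc
    filter_upwards [h4 p hp c (lt_of_lt_of_eq hc (heq p hp).symm), self_mem_nhdsWithin]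
      with q hq hqK
    exact lt_of_lt_of_eq hq (heq q hqK)
  have hTe : ∀ n x, Tbell Adm Q C α (e n) x ≤ e n x := by
    intro n x
    refine le_of_forall_lt fun c hc => ?_
    obtain ⟨d, hcd, hd⟩ := exists_between hc
    refine hcd.trans_le (pi_env_ge (hE n) x d ?_)
    have ht := pi_tube Adm hAcomp hAusc _ (hlsc n) x d
      (fun a ha => hd.trans_le (hTle n x a ha))
    filter_upwards [ht] with x' hx'
    have h1 := hx' _ (hfsel (n + 1) x')
    refine h1.le.trans ?_
    refine le_trans (le_of_eq ?_) (hTv n x')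
    exact (himp n x').symm
  have hdiff : ∀ n x, v (n + 1) x - Tbell Adm Q C α (e n) x
      = α * ∫ y, v (n + 1) y - e n y ∂(Q (x, f (n + 1) x)) := by
    intro n x
    rw [himp n x, hvfix (n + 1) x, integral_sub (hvint (n + 1) x _ (hfsel (n + 1) x))
      (heint n x _ (hfsel (n + 1) x))]
    ring
  have hstep : ∀ n, ∀ L : ℝ, 0 ≤ L → (∀ x, v (n + 1) x - e n x ≤ L * W x) →
      ∀ x, v (n + 1) x - Tbell Adm Q C α (e n) x ≤ (α * β) * L * W x := by
    intro n L hL hle x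
    rw [hdiff n x]
    have hs := hfsel (n + 1) x
    have h1 := integral_mono ((hvint (n + 1) x _ hs).sub (heint n x _ hs))
      ((hWint x _ hs).const_mul L) hle
    rw [integral_const_mul] at h1
    have h2 := mul_le_mul_of_nonneg_left (hWle x _ hs) hL
    have h3 := mul_le_mul_of_nonneg_left (h1.trans h2) hα0.le
    calc _ ≤ α * (L * (β * W x)) := h3
      _ = _ := by ring
  have hγ0 : 0 ≤ α * β := mul_nonneg hα0.le (by linarith)
  have hvT : ∀ n x, v (n + 1) x ≤ Tbell Adm Q C α (e n) x := by
    intro n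
    have hL0 : 0 ≤ N (n + 1) + N n := add_nonneg (hN0 _) (hN0 _)
    have hiter : ∀ k : ℕ, ∀ x,
        v (n + 1) x - e n x ≤ (α * β) ^ k * (N (n + 1) + N n) * W x := by
      intro k
      induction k with
      | zero =>
        intro x
        have h1 := (abs_le.1 (hN (n + 1) x)).2
        have h2 := helow n x
        rw [pow_zero, one_mul, add_mul]
        linarith
      | succ k ih =>
        intro x
        have h1 := hstep n _ (mul_nonneg (pow_nonneg hγ0 k) hL0) ih x
        have h2 := hTe n x
        calc _ ≤ v (n + 1) x - Tbell Adm Q C α (e n) x := by linarith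
          _ ≤ _ := h1
          _ = _ := by ring
    have hlim : ∀ x, v (n + 1) x - e n x ≤ 0 := by
      intro x
      have ht := ((tendsto_pow_atTop_nhds_zero_of_lt_one hγ0 hγ).mul_const
        (N (n + 1) + N n)).mul_const (W x)
      rw [zero_mul, zero_mul] at ht
      exact ge_of_tendsto' ht fun k => hiter k x
    intro x
    have := hstep n 0 le_rfl (fun x => by rw [zero_mul]; exact hlim x) x
    rw [mul_zero, zero_mul] at this
    linarith
  exact fun n x => ⟨hev n x, hTe n x, hvT n x, hev (n + 1) x⟩
end

section
/- Assume the growth conditions (GC) and the compactness-continuity conditions (CC), and let v* be the unique lower semicontinuous function of finite W-norm with v* = T v*. Let f₀ be a measurable selector and define the policy iteration sequences by v_n := V_{f_n} and f_{n+1} a measurable selector with T(v_n^e) = T_{f_{n+1}}(v_n^e). Then ‖v_{n+1} − v*‖_W ≤ γ·‖v_n − v*‖_W for all n ≥ 0, and consequently ‖v_n − v*‖_W ≤ γ^n·‖v_0 − v*‖_W; that is, the policy iteration functions converge linearly to v* in the weighted norm ‖·‖_W. -/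
open MeasureTheory ProbabilityTheory Filter Topology
open scoped ENNReal

namespace PolIter

lemma wnorm_bound {X : Type*} (W u : X → ℝ) (hW1 : ∀ x, 1 ≤ W x) (h : WNorm W u < ⊤) (x : X) :
    |u x| ≤ (WNorm W u).toReal * W x := by
  have hWx : 0 < W x := lt_of_lt_of_le one_pos (hW1 x)
  have h1 : ENNReal.ofReal (|u x| / W x) ≤ WNorm W u :=
    le_iSup (fun x => ENNReal.ofReal (|u x| / W x)) x
  have h2 := (ENNReal.ofReal_le_iff_le_toReal h.ne).1 h1
  exact (div_le_iff₀ hWx).1 h2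

lemma wnorm_le {X : Type*} (W u : X → ℝ) (hW1 : ∀ x, 1 ≤ W x) (k : ℝ)
    (h : ∀ x, |u x| ≤ k * W x) : WNorm W u ≤ ENNReal.ofReal k := by
  refine iSup_le fun x => ENNReal.ofReal_le_ofReal ?_
  have hWx : 0 < W x := lt_of_lt_of_le one_pos (hW1 x)
  exact (div_le_iff₀ hWx).2 (h x)

lemma env_le {X : Type*} [MetricSpace X] (v e : X → ℝ)
    (hE : ∀ x, (e x : EReal) = lscEnvE v x) (x : X) : e x ≤ v x := by
  have : (e x : EReal) ≤ (v x : EReal) := by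
    rw [hE x]
    unfold lscEnvE
    refine iSup₂_le fun r hr => ?_
    exact iInf₂_le x (Metric.mem_ball_self hr)
  exact_mod_cast this

lemma le_env {X : Type*} [MetricSpace X] (v e g : X → ℝ)
    (hE : ∀ x, (e x : EReal) = lscEnvE v x) (hg : LowerSemicontinuous g)
    (hgv : ∀ x, g x ≤ v x) (x : X) : g x ≤ e x := by
  refine le_of_forall_lt fun c hc => ?_
  obtain ⟨c', hc1, hc2⟩ := exists_between hc
  refine lt_of_lt_of_le hc1 ?_
  have h1 := hg x c' hc2
  obtain ⟨r, hr, hb⟩ := Metric.eventually_nhds_iff_ball.1 h1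
  have : (c' : EReal) ≤ (e x : EReal) := by
    rw [hE x]
    unfold lscEnvE
    refine le_trans ?_ (le_iSup₂ (f := fun (r : ℝ) (_ : r ∈ Set.Ioi (0:ℝ)) =>
      ⨅ y ∈ Metric.ball x r, (v y : EReal)) r hr)
    refine le_iInf₂ fun y hy => ?_
    exact_mod_cast ((hb y hy).le.trans (hgv y))
  exact_mod_cast this

lemma env_lsc {X : Type*} [MetricSpace X] (v e : X → ℝ)
    (hE : ∀ x, (e x : EReal) = lscEnvE v x) : LowerSemicontinuous e := by
  intro x c hc
  have h1 : (c : EReal) < lscEnvE v x := by rw [← hE x]; exact_mod_cast hc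
  unfold lscEnvE at h1
  simp only [lt_iSup_iff] at h1
  obtain ⟨r, hr, h2⟩ := h1
  have hr' : 0 < r := hr
  filter_upwards [Metric.ball_mem_nhds x hr'] with y hy
  have : (c : EReal) < (e y : EReal) := by
    rw [hE y]
    unfold lscEnvE
    have hy' : 0 < r - dist y x := by have := Metric.mem_ball.1 hy; linarith
    refine lt_of_lt_of_le h2 (le_trans ?_ (le_iSup₂ (f := fun (r : ℝ) (_ : r ∈ Set.Ioi (0:ℝ)) =>
      ⨅ z ∈ Metric.ball y r, (v z : EReal)) (r - dist y x) hy'))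
    refine le_iInf₂ fun z hz => ?_
    refine iInf₂_le z ?_
    exact Metric.ball_subset_ball' (by linarith) hz
  exact_mod_cast this

/-- Lipschitz regularisation of a nonnegative function. -/
noncomputable def reg {X : Type*} [MetricSpace X] (g : X → ℝ) (n : ℕ) (x : X) : ℝ :=
  ⨅ y, (min (g y) n + n * dist x y)

lemma reg_bdd {X : Type*} [MetricSpace X] (g : X → ℝ) (hg : ∀ x, 0 ≤ g x) (n : ℕ) (x : X) :
    BddBelow (Set.range fun y => (min (g y) n + n * dist x y)) := by
  refine ⟨0, ?_⟩
  rintro _ ⟨y, rfl⟩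
  have : 0 ≤ min (g y) n := le_min (hg y) (Nat.cast_nonneg n)
  simp only
  positivity

lemma reg_nonneg {X : Type*} [MetricSpace X] (g : X → ℝ) (hg : ∀ x, 0 ≤ g x) (n : ℕ) (x : X) :
    0 ≤ reg g n x := by
  have : Nonempty X := ⟨x⟩
  refine le_ciInf fun y => ?_
  have : 0 ≤ min (g y) n := le_min (hg y) (Nat.cast_nonneg n)
  positivity

lemma reg_le {X : Type*} [MetricSpace X] (g : X → ℝ) (hg : ∀ x, 0 ≤ g x) (n : ℕ) (x : X) :
    reg g n x ≤ min (g x) n := by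
  have := ciInf_le (reg_bdd g hg n x) x
  simpa [reg] using this

lemma reg_cont {X : Type*} [MetricSpace X] (g : X → ℝ) (hg : ∀ x, 0 ≤ g x) (n : ℕ) :
    Continuous (reg g n) := by
  refine (LipschitzWith.of_le_add_mul (n : NNReal) fun x x' => ?_).continuous
  have : Nonempty X := ⟨x⟩
  rw [← sub_le_iff_le_add]
  refine le_ciInf fun y => ?_
  have h1 : reg g n x ≤ min (g y) n + n * dist x y := ciInf_le (reg_bdd g hg n x) y
  have h2 : (n : ℝ) * dist x y ≤ n * (dist x x' + dist x' y) :=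
    mul_le_mul_of_nonneg_left (dist_triangle _ _ _) (Nat.cast_nonneg n)
  simp only [NNReal.coe_natCast]
  linarith

lemma reg_mono {X : Type*} [MetricSpace X] (g : X → ℝ) (hg : ∀ x, 0 ≤ g x) (x : X) :
    Monotone (fun n => reg g n x) := by
  intro m n hmn
  have hmn' : (m : ℝ) ≤ n := by exact_mod_cast hmn
  refine ciInf_mono (reg_bdd g hg m x) fun y => ?_
  exact add_le_add (min_le_min le_rfl hmn') (mul_le_mul_of_nonneg_right hmn' dist_nonneg)

lemma reg_sup {X : Type*} [MetricSpace X] (g : X → ℝ) (hg : ∀ x, 0 ≤ g x)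
    (hl : LowerSemicontinuous g) (x : X) :
    ⨆ n, ENNReal.ofReal (reg g n x) = ENNReal.ofReal (g x) := by
  have : Nonempty X := ⟨x⟩
  apply le_antisymm
  · exact iSup_le fun n => ENNReal.ofReal_le_ofReal ((reg_le g hg n x).trans (min_le_left _ _))
  · have key : ∀ c : ℝ, 0 ≤ c → c < g x → ∃ n, c ≤ reg g n x := by
      intro c hc0 hc
      obtain ⟨r, hr, hb⟩ := Metric.eventually_nhds_iff_ball.1 (hl x c hc)
      obtain ⟨n, hn⟩ := exists_nat_ge (max c (c / r))
      refine ⟨n, le_ciInf fun y => ?_⟩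
      have hn1 : c ≤ n := (le_max_left _ _).trans hn
      have hn2 : c ≤ n * r := (div_le_iff₀ hr).1 ((le_max_right _ _).trans hn)
      have h0 : 0 ≤ min (g y) n := le_min (hg y) (Nat.cast_nonneg n)
      by_cases hy : y ∈ Metric.ball x r
      · have : c ≤ min (g y) n := le_min (hb y hy).le hn1
        have : 0 ≤ (n : ℝ) * dist x y := by positivity
        linarith
      · have h3 : r ≤ dist x y := by
          rw [dist_comm]; simpa [Metric.mem_ball] using hy
        have : (n : ℝ) * r ≤ n * dist x y := mul_le_mul_of_nonneg_left h3 (Nat.cast_nonneg n)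
        linarith
    refine le_of_forall_lt fun c hc => ?_
    obtain ⟨c', hc1, hc2⟩ := exists_between hc
    have hct : c' ≠ ⊤ := (hc2.trans ENNReal.ofReal_lt_top).ne
    obtain ⟨n, hn⟩ := key c'.toReal ENNReal.toReal_nonneg
      (by rwa [← ENNReal.lt_ofReal_iff_toReal_lt hct])
    refine lt_of_lt_of_le hc1 (le_trans ?_ (le_iSup _ n))
    exact (ENNReal.le_ofReal_iff_toReal_le hct (reg_nonneg g hg n x)).2 hn

lemma lintegral_lsc {X P : Type*} [MetricSpace X] [MeasurableSpace X] [BorelSpace X]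
    [TopologicalSpace P] [MeasurableSpace P]
    (Q : Kernel P X) [IsMarkovKernel Q] (K : Set P)
    (hQweak : ∀ g : X → ℝ, Continuous g → (∃ b, ∀ y, |g y| ≤ b) →
      ContinuousOn (fun p : P => ∫ y, g y ∂(Q p)) K)
    (g : X → ℝ) (hg : ∀ x, 0 ≤ g x) (hl : LowerSemicontinuous g) :
    LowerSemicontinuousOn (fun p => ∫⁻ y, ENNReal.ofReal (g y) ∂(Q p)) K := by
  have h1 : (fun p => ∫⁻ y, ENNReal.ofReal (g y) ∂(Q p)) =
      fun p => ⨆ n, ENNReal.ofReal (∫ y, reg g n y ∂(Q p)) := by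
    funext p
    simp_rw [← reg_sup g hg hl]
    rw [lintegral_iSup]
    · congr 1
      funext n
      rw [ofReal_integral_eq_lintegral_ofReal]
      · refine Integrable.of_bound (reg_cont g hg n).measurable.aestronglyMeasurable n ?_
        refine Eventually.of_forall fun y => ?_
        rw [Real.norm_of_nonneg (reg_nonneg g hg n y)]
        exact (reg_le g hg n y).trans (min_le_right _ _)
      · exact Eventually.of_forall fun y => reg_nonneg g hg n y
    · exact fun n => (reg_cont g hg n).measurable.ennreal_ofReal
    · intro m n hmn y
      exact ENNReal.ofReal_le_ofReal (reg_mono g hg y hmn)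
  rw [h1]
  refine lowerSemicontinuousOn_iSup fun n => ?_
  refine ContinuousOn.lowerSemicontinuousOn ?_
  refine ENNReal.continuous_ofReal.comp_continuousOn ?_
  refine hQweak _ (reg_cont g hg n) ⟨n, fun y => ?_⟩
  rw [abs_of_nonneg (reg_nonneg g hg n y)]
  exact (reg_le g hg n y).trans (min_le_right _ _)

lemma integrable_W {X : Type*} [MeasurableSpace X] (μ : Measure X) (W : X → ℝ)
    (hW : Measurable W) (hW1 : ∀ x, 1 ≤ W x) (b : ℝ)
    (h : ∫⁻ y, ENNReal.ofReal (W y) ∂μ ≤ ENNReal.ofReal b) : Integrable W μ := by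
  refine (lintegral_ofReal_ne_top_iff_integrable hW.aestronglyMeasurable
    (Eventually.of_forall fun y => (zero_le_one.trans (hW1 y)))).1 ?_
  exact (h.trans_lt ENNReal.ofReal_lt_top).ne

lemma integral_W_le {X : Type*} [MeasurableSpace X] (μ : Measure X) (W : X → ℝ)
    (hW : Measurable W) (hW1 : ∀ x, 1 ≤ W x) (b : ℝ) (hb : 0 ≤ b)
    (h : ∫⁻ y, ENNReal.ofReal (W y) ∂μ ≤ ENNReal.ofReal b) : ∫ y, W y ∂μ ≤ b := by
  rw [integral_eq_lintegral_of_nonneg_ae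
    (Eventually.of_forall fun y => (zero_le_one.trans (hW1 y))) hW.aestronglyMeasurable]
  exact ENNReal.toReal_le_of_le_ofReal hb h

lemma integrable_u {X : Type*} [MeasurableSpace X] (μ : Measure X) (W u : X → ℝ)
    (hW : Integrable W μ) (hu : Measurable u) (k : ℝ) (h : ∀ x, |u x| ≤ k * W x) :
    Integrable u μ :=
  (hW.const_mul k).mono' hu.aestronglyMeasurable (Eventually.of_forall h)

lemma integral_lsc {X P : Type*} [MetricSpace X] [MeasurableSpace X] [BorelSpace X]
    [TopologicalSpace P] [MeasurableSpace P]
    (Q : Kernel P X) [IsMarkovKernel Q] (K : Set P)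
    (hQweak : ∀ g : X → ℝ, Continuous g → (∃ b, ∀ y, |g y| ≤ b) →
      ContinuousOn (fun p : P => ∫ y, g y ∂(Q p)) K)
    (W : X → ℝ) (hWc : Continuous W) (hWi : ∀ p ∈ K, Integrable W (Q p))
    (hQWcont : ContinuousOn (fun p : P => ∫ y, W y ∂(Q p)) K)
    (u : X → ℝ) (hu : LowerSemicontinuous u) (k : ℝ) (hk : ∀ x, |u x| ≤ k * W x) :
    LowerSemicontinuousOn (fun p => ∫ y, u y ∂(Q p)) K := by
  set g : X → ℝ := fun y => u y + k * W y with hgdef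
  have hg : ∀ y, 0 ≤ g y := fun y => by
    have := (abs_le.1 (hk y)).1
    simp only [hgdef]; linarith
  have hgl : LowerSemicontinuous g :=
    hu.add (continuous_const.mul hWc).lowerSemicontinuous
  have hui : ∀ p ∈ K, Integrable u (Q p) := fun p hp =>
    integrable_u _ W u (hWi p hp) hu.measurable k hk
  have hgi : ∀ p ∈ K, Integrable g (Q p) := fun p hp =>
    (hui p hp).add ((hWi p hp).const_mul k)
  have hL := lintegral_lsc Q K hQweak g hg hgl
  have hG : LowerSemicontinuousOn (fun p => ∫ y, g y ∂(Q p)) K := by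
    intro p hp c hc
    by_cases hc0 : c < 0
    · exact Eventually.of_forall fun q => lt_of_lt_of_le hc0 (integral_nonneg hg)
    · push Not at hc0
      have h1 : ENNReal.ofReal c < ∫⁻ y, ENNReal.ofReal (g y) ∂(Q p) := by
        rw [← ofReal_integral_eq_lintegral_ofReal (hgi p hp) (Eventually.of_forall hg)]
        exact (ENNReal.ofReal_lt_ofReal_iff_of_nonneg hc0).2 hc
      filter_upwards [hL p hp _ h1, self_mem_nhdsWithin] with q hq hqK
      rw [← ofReal_integral_eq_lintegral_ofReal (hgi q hqK) (Eventually.of_forall hg)] at hq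
      exact (ENNReal.ofReal_lt_ofReal_iff_of_nonneg hc0).1 hq
  have h2 : LowerSemicontinuousOn (fun p => ∫ y, g y ∂(Q p) + -(k * ∫ y, W y ∂(Q p))) K :=
    hG.add ((continuousOn_const.mul hQWcont).neg).lowerSemicontinuousOn
  have heq : ∀ p ∈ K, ∫ y, g y ∂(Q p) + -(k * ∫ y, W y ∂(Q p)) = ∫ y, u y ∂(Q p) := by
    intro p hp
    simp only [hgdef]
    rw [integral_add (hui p hp) ((hWi p hp).const_mul k), integral_const_mul]
    ring
  intro p hp c hc
  simp only at hc
  rw [← heq p hp] at hc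
  filter_upwards [h2 p hp c hc, self_mem_nhdsWithin] with q hq hqK
  rw [← heq q hqK]
  exact hq

lemma inf_lsc {X A : Type*} [TopologicalSpace X] [TopologicalSpace A]
    (Adm : X → Set A) (hAne : ∀ x, (Adm x).Nonempty)
    (hAcomp : ∀ x, IsCompact (Adm x))
    (hAusc : ∀ x, ∀ U : Set A, IsOpen U → Adm x ⊆ U → ∀ᶠ x' in 𝓝 x, Adm x' ⊆ U)
    (G : X × A → ℝ) (hG : LowerSemicontinuousOn G {p : X × A | p.2 ∈ Adm p.1})
    (hb : ∀ x, BddBelow ((fun a => G (x, a)) '' Adm x)) :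
    LowerSemicontinuous (fun x => sInf ((fun a => G (x, a)) '' Adm x)) := by
  intro x c hc
  obtain ⟨c', hc1, hc2⟩ := exists_between hc
  have h1 : {p : X × A | p ∈ {p : X × A | p.2 ∈ Adm p.1} → c' < G p} ∈ 𝓝 x ×ˢ 𝓝ˢ (Adm x) := by
    refine (hAcomp x).mem_prod_nhdsSet_of_forall fun a ha => ?_
    rw [← nhds_prod_eq]
    refine eventually_nhdsWithin_iff.1 (hG (x, a) ha c' ?_)
    exact lt_of_lt_of_le hc2 (csInf_le (hb x) ⟨a, ha, rfl⟩)
  obtain ⟨t1, ht1, t2, ht2, hsub⟩ := mem_prod_iff.1 h1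
  obtain ⟨U, hU, hAU, hUt⟩ := mem_nhdsSet_iff_exists.1 ht2
  filter_upwards [ht1, hAusc x U hU hAU] with y hy1 hy2
  refine lt_of_lt_of_le hc1 (le_csInf ((hAne y).image _) ?_)
  rintro _ ⟨a, ha, rfl⟩
  exact (hsub (show (y, a) ∈ t1 ×ˢ t2 from ⟨hy1, hUt (hy2 ha)⟩) ha).le

lemma nonpos_of_sub {X : Type*} [MeasurableSpace X] (μ : X → Measure X) (W : X → ℝ)
    (hW1 : ∀ x, 1 ≤ W x) (hWi : ∀ x, Integrable W (μ x)) (α β : ℝ) (hα : 0 < α) (hβ : 1 < β)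
    (hγ : α * β < 1) (hWb : ∀ x, ∫ y, W y ∂(μ x) ≤ β * W x)
    (w : X → ℝ) (hw : Measurable w) (c : ℝ) (hc0 : 0 ≤ c) (hc : ∀ x, |w x| ≤ c * W x)
    (h : ∀ x, w x ≤ α * ∫ y, w y ∂(μ x)) (x : X) : w x ≤ 0 := by
  have hγ0 : 0 ≤ α * β := by positivity
  have step : ∀ n : ℕ, ∀ x, w x ≤ (α * β) ^ n * c * W x := by
    intro n
    induction n with
    | zero => intro x; simpa using (le_abs_self _).trans (hc x)
    | succ n ih =>
      intro x
      have h1 : ∫ y, w y ∂(μ x) ≤ (α * β) ^ n * c * ∫ y, W y ∂(μ x) := by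
        rw [← integral_const_mul]
        exact integral_mono (integrable_u _ W w (hWi x) hw c hc) ((hWi x).const_mul _) ih
      have h2 : (α * β) ^ n * c * ∫ y, W y ∂(μ x) ≤ (α * β) ^ n * c * (β * W x) :=
        mul_le_mul_of_nonneg_left (hWb x) (by positivity)
      calc w x ≤ α * ∫ y, w y ∂(μ x) := h x
        _ ≤ α * ((α * β) ^ n * c * (β * W x)) := mul_le_mul_of_nonneg_left (h1.trans h2) hα.le
        _ = (α * β) ^ (n + 1) * c * W x := by ring
  have ht : Tendsto (fun n : ℕ => (α * β) ^ n * c * W x) atTop (𝓝 (0 * c * W x)) :=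
    ((tendsto_pow_atTop_nhds_zero_of_lt_one hγ0 hγ).mul_const c).mul_const (W x)
  simp only [zero_mul] at ht
  exact ge_of_tendsto' ht fun n => step n x

end PolIter

/-- Linear convergence of the policy iteration algorithm with smoothing: under
(GC) and (CC), with `v*` the lower semicontinuous fixed point of `T` of finite
`W`-norm and `v_n = V_{f_n}` the policy iteration functions,
`‖v_{n+1} − v*‖_W ≤ γ ‖v_n − v*‖_W` and hence
`‖v_n − v*‖_W ≤ γⁿ ‖v_0 − v*‖_W`, where `γ = αβ` (Corollary 1 of the paper). -/
theorem policy_iteration_linear_convergence {X A : Type*}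
    [MetricSpace X] [PolishSpace X] [MeasurableSpace X] [BorelSpace X]
    [MetricSpace A] [PolishSpace A] [MeasurableSpace A] [BorelSpace A]
    (Adm : X → Set A) (hAne : ∀ x, (Adm x).Nonempty)
    (hKmeas : MeasurableSet {p : X × A | p.2 ∈ Adm p.1})
    (Q : Kernel (X × A) X) [IsMarkovKernel Q]
    (C : X × A → ℝ) (hCmeas : Measurable C)
    (α : ℝ) (hα0 : 0 < α) (hα1 : α < 1)
    (M β : ℝ) (hM : 0 < M) (hβ : 1 < β)
    (W : X → ℝ) (hWmeas : Measurable W) (hW1 : ∀ x, 1 ≤ W x)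
    (hCW : ∀ x, ∀ a ∈ Adm x, |C (x, a)| ≤ M * W x)
    (hQW : ∀ x, ∀ a ∈ Adm x,
      ∫⁻ y, ENNReal.ofReal (W y) ∂(Q (x, a)) ≤ ENNReal.ofReal (β * W x))
    (hγ : α * β < 1)
    (hAcomp : ∀ x, IsCompact (Adm x))
    (hAusc : ∀ x, ∀ U : Set A, IsOpen U → Adm x ⊆ U → ∀ᶠ x' in 𝓝 x, Adm x' ⊆ U)
    (hClsc : LowerSemicontinuousOn C {p : X × A | p.2 ∈ Adm p.1})
    (hQweak : ∀ g : X → ℝ, Continuous g → (∃ b, ∀ y, |g y| ≤ b) →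
      ContinuousOn (fun p : X × A => ∫ y, g y ∂(Q p)) {p : X × A | p.2 ∈ Adm p.1})
    (hWcont : Continuous W)
    (hQWcont : ContinuousOn (fun p : X × A => ∫ y, W y ∂(Q p))
      {p : X × A | p.2 ∈ Adm p.1})
    (f : ℕ → X → A) (hfmeas : ∀ n, Measurable (f n))
    (hfsel : ∀ n x, f n x ∈ Adm x)
    (v : ℕ → X → ℝ) (hvmeas : ∀ n, Measurable (v n))
    (hvW : ∀ n, WNorm W (v n) < ⊤)
    (hvfix : ∀ n x, v n x = C (x, f n x) + α * ∫ y, v n y ∂(Q (x, f n x)))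
    (e : ℕ → X → ℝ) (hE : ∀ n x, (e n x : EReal) = lscEnvE (v n) x)
    (himp : ∀ n x, Tbell Adm Q C α (e n) x =
      C (x, f (n + 1) x) + α * ∫ y, e n y ∂(Q (x, f (n + 1) x)))
    (vstar : X → ℝ) (hvstarlsc : LowerSemicontinuous vstar)
    (hvstarW : WNorm W vstar < ⊤)
    (hvstarfix : ∀ x, vstar x = Tbell Adm Q C α vstar x) :
    (∀ n, WNorm W (fun x => v (n + 1) x - vstar x) ≤
      ENNReal.ofReal (α * β) * WNorm W (fun x => v n x - vstar x)) ∧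
    ∀ n, WNorm W (fun x => v n x - vstar x) ≤
      ENNReal.ofReal (α * β) ^ n * WNorm W (fun x => v 0 x - vstar x) := by
  set K : Set (X × A) := {p : X × A | p.2 ∈ Adm p.1} with hK
  have hW0 : ∀ x, 0 ≤ W x := fun x => zero_le_one.trans (hW1 x)
  have hWi : ∀ x, ∀ a ∈ Adm x, Integrable W (Q (x, a)) := fun x a ha =>
    PolIter.integrable_W _ W hWmeas hW1 _ (hQW x a ha)
  have hWb : ∀ x, ∀ a ∈ Adm x, ∫ y, W y ∂(Q (x, a)) ≤ β * W x := fun x a ha =>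
    PolIter.integral_W_le _ W hWmeas hW1 _ (mul_nonneg (by linarith) (hW0 x)) (hQW x a ha)
  -- bounded below
  have hbdd : ∀ (u : X → ℝ) (k : ℝ), 0 ≤ k → Measurable u → (∀ x, |u x| ≤ k * W x) → ∀ x,
      BddBelow ((fun a => C (x, a) + α * ∫ y, u y ∂(Q (x, a))) '' Adm x) := by
    intro u k hk hu hb x
    refine ⟨-(M * W x) + α * (-(k * (β * W x))), ?_⟩
    rintro _ ⟨a, ha, rfl⟩
    have h1 := (abs_le.1 (hCW x a ha)).1
    have h2 : -(k * ∫ y, W y ∂(Q (x, a))) ≤ ∫ y, u y ∂(Q (x, a)) := by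
      rw [← integral_const_mul, ← integral_neg]
      exact integral_mono ((hWi x a ha).const_mul k).neg
        (PolIter.integrable_u _ W u (hWi x a ha) hu k hb) (fun y => (abs_le.1 (hb y)).1)
    have h3 := mul_le_mul_of_nonneg_left (hWb x a ha) hk
    have h4 : -(k * (β * W x)) ≤ ∫ y, u y ∂(Q (x, a)) := by linarith
    exact add_le_add h1 (mul_le_mul_of_nonneg_left h4 hα0.le)
  have hTle : ∀ (u : X → ℝ) (k : ℝ), 0 ≤ k → Measurable u → (∀ x, |u x| ≤ k * W x) → ∀ x,
      ∀ a ∈ Adm x, Tbell Adm Q C α u x ≤ C (x, a) + α * ∫ y, u y ∂(Q (x, a)) := by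
    intro u k hk hu hb x a ha
    exact csInf_le (hbdd u k hk hu hb x) ⟨a, ha, rfl⟩
  -- v*
  set ks := (WNorm W vstar).toReal with hks
  have hks0 : 0 ≤ ks := ENNReal.toReal_nonneg
  have hsb : ∀ x, |vstar x| ≤ ks * W x := PolIter.wnorm_bound W vstar hW1 hvstarW
  have hsm : Measurable vstar := hvstarlsc.measurable
  have hsi : ∀ x, ∀ a ∈ Adm x, Integrable vstar (Q (x, a)) := fun x a ha =>
    PolIter.integrable_u _ W _ (hWi x a ha) hsm ks hsb
  have hvb : ∀ n x, |v n x| ≤ (WNorm W (v n)).toReal * W x := fun n =>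
    PolIter.wnorm_bound W (v n) hW1 (hvW n)
  have hvi : ∀ n x, ∀ a ∈ Adm x, Integrable (v n) (Q (x, a)) := fun n x a ha =>
    PolIter.integrable_u _ W _ (hWi x a ha) (hvmeas n) _ (hvb n)
  have hsv : ∀ n x, vstar x ≤ v n x := by
    intro n x
    have := PolIter.nonpos_of_sub (fun x => Q (x, f n x)) W hW1
      (fun x => hWi x _ (hfsel n x)) α β hα0 hβ hγ (fun x => hWb x _ (hfsel n x))
      (fun x => vstar x - v n x) (hsm.sub (hvmeas n)) (ks + (WNorm W (v n)).toReal)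
      (add_nonneg hks0 ENNReal.toReal_nonneg)
      (fun x => by
        have := abs_sub (vstar x) (v n x)
        have h1 := hsb x
        have h2 := hvb n x
        linarith)
      (fun x => by
        have h1 := hTle vstar ks hks0 hsm hsb x _ (hfsel n x)
        rw [← hvstarfix] at h1
        rw [integral_sub (hsi x _ (hfsel n x)) (hvi n x _ (hfsel n x)), mul_sub]
        have h2 := hvfix n x
        linarith) x
    linarith
  have hel : ∀ n, LowerSemicontinuous (e n) := fun n => PolIter.env_lsc (v n) (e n) (hE n)
  have hem : ∀ n, Measurable (e n) := fun n => (hel n).measurable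
  have hev : ∀ n x, e n x ≤ v n x := fun n => PolIter.env_le (v n) (e n) (hE n)
  have heb : ∀ n x, |e n x| ≤ (WNorm W (v n)).toReal * W x := by
    intro n x
    refine abs_le.2 ⟨?_, (hev n x).trans (abs_le.1 (hvb n x)).2⟩
    exact PolIter.le_env (v n) (e n) (fun x => -((WNorm W (v n)).toReal * W x)) (hE n)
      (continuous_const.mul hWcont).neg.lowerSemicontinuous
      (fun x => (abs_le.1 (hvb n x)).1) x
  have hei : ∀ n x, ∀ a ∈ Adm x, Integrable (e n) (Q (x, a)) := fun n x a ha =>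
    PolIter.integrable_u _ W _ (hWi x a ha) (hem n) _ (heb n)
  have hTl : ∀ n, LowerSemicontinuous (Tbell Adm Q C α (e n)) := by
    intro n
    have hI := PolIter.integral_lsc Q K hQweak W hWcont (fun p hp => hWi p.1 p.2 hp) hQWcont
      (e n) (hel n) _ (heb n)
    refine PolIter.inf_lsc Adm hAne hAcomp hAusc
      (fun p => C p + α * ∫ y, e n y ∂(Q p)) ?_
      (hbdd (e n) _ ENNReal.toReal_nonneg (hem n) (heb n))
    refine hClsc.add ?_
    intro p hp c hc
    have hc' : c / α < ∫ y, e n y ∂(Q p) := by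
      rw [div_lt_iff₀ hα0]; simpa [mul_comm] using hc
    filter_upwards [hI p hp _ hc'] with q hq
    rw [gt_iff_lt, div_lt_iff₀ hα0] at hq
    simpa [mul_comm] using hq
  have hTe : ∀ n x, Tbell Adm Q C α (e n) x ≤ e n x := by
    intro n
    refine PolIter.le_env (v n) (e n) _ (hE n) (hTl n) fun x => ?_
    refine (hTle (e n) _ ENNReal.toReal_nonneg (hem n) (heb n) x _ (hfsel n x)).trans ?_
    rw [hvfix n x]
    have := integral_mono (hei n x _ (hfsel n x)) (hvi n x _ (hfsel n x)) (hev n)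
    have := mul_le_mul_of_nonneg_left this hα0.le
    linarith
  have hve : ∀ n x, v (n + 1) x ≤ e n x := by
    intro n x
    have := PolIter.nonpos_of_sub (fun x => Q (x, f (n + 1) x)) W hW1
      (fun x => hWi x _ (hfsel (n + 1) x)) α β hα0 hβ hγ (fun x => hWb x _ (hfsel (n + 1) x))
      (fun x => v (n + 1) x - e n x) ((hvmeas (n + 1)).sub (hem n))
      ((WNorm W (v (n + 1))).toReal + (WNorm W (v n)).toReal)
      (add_nonneg ENNReal.toReal_nonneg ENNReal.toReal_nonneg)
      (fun x => by
        have := abs_sub (v (n + 1) x) (e n x)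
        have h1 := hvb (n + 1) x
        have h2 := heb n x
        linarith)
      (fun x => by
        have h1 := hTe n x
        rw [himp n x] at h1
        rw [integral_sub (hvi (n + 1) x _ (hfsel (n + 1) x)) (hei n x _ (hfsel (n + 1) x)),
          mul_sub]
        have h2 := hvfix (n + 1) x
        linarith) x
    linarith
  have hvT : ∀ n x, v (n + 1) x ≤ Tbell Adm Q C α (e n) x := by
    intro n x
    rw [himp n x, hvfix (n + 1) x]
    have := integral_mono (hvi (n + 1) x _ (hfsel (n + 1) x)) (hei n x _ (hfsel (n + 1) x))
      (hve n)
    have := mul_le_mul_of_nonneg_left this hα0.le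
    linarith
  have hγ0 : 0 ≤ α * β := mul_nonneg hα0.le (by linarith)
  have main : ∀ n, WNorm W (fun x => v (n + 1) x - vstar x) ≤
      ENNReal.ofReal (α * β) * WNorm W (fun x => v n x - vstar x) := by
    intro n
    have hfin : WNorm W (fun x => v n x - vstar x) < ⊤ := by
      refine (PolIter.wnorm_le W _ hW1 ((WNorm W (v n)).toReal + ks) fun x => ?_).trans_lt
        ENNReal.ofReal_lt_top
      have := abs_sub (v n x) (vstar x)
      have h1 := hvb n x
      have h2 := hsb x
      linarith
    set k := (WNorm W (fun x => v n x - vstar x)).toReal with hk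
    have hk0 : 0 ≤ k := ENNReal.toReal_nonneg
    have hkb : ∀ x, |v n x - vstar x| ≤ k * W x :=
      PolIter.wnorm_bound W (fun x => v n x - vstar x) hW1 hfin
    rw [← ENNReal.ofReal_toReal hfin.ne, ← hk, ← ENNReal.ofReal_mul hγ0]
    refine PolIter.wnorm_le W _ hW1 _ fun x => ?_
    rw [abs_of_nonneg (sub_nonneg.2 (hsv (n + 1) x))]
    have h1 : Tbell Adm Q C α (e n) x - α * β * k * W x ≤ Tbell Adm Q C α vstar x := by
      refine le_csInf ((hAne x).image _) ?_
      rintro _ ⟨a, ha, rfl⟩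
      have h2 := hTle (e n) _ ENNReal.toReal_nonneg (hem n) (heb n) x a ha
      have h3 : ∫ y, e n y ∂(Q (x, a)) - ∫ y, vstar y ∂(Q (x, a)) ≤
          k * ∫ y, W y ∂(Q (x, a)) := by
        rw [← integral_sub (hei n x a ha) (hsi x a ha), ← integral_const_mul]
        refine integral_mono ((hei n x a ha).sub (hsi x a ha)) ((hWi x a ha).const_mul k)
          fun y => ?_
        have h4 := (abs_le.1 (hkb y)).2
        have h5 := hev n y
        simp only
        linarith
      have h6 := mul_le_mul_of_nonneg_left (hWb x a ha) hk0
      have h7 := mul_le_mul_of_nonneg_left (h3.trans h6) hα0.le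
      simp only
      have h8 : α * (k * (β * W x)) = α * β * k * W x := by ring
      rw [mul_sub, h8] at h7
      linarith
    rw [← hvstarfix] at h1
    have h9 := hvT n x
    linarith
  refine ⟨main, fun n => ?_⟩
  induction n with
  | zero => simp
  | succ n ih =>
    refine (main n).trans ?_
    rw [pow_succ', mul_assoc]
    gcongr
end
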